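/- arXiv:1909.06542 — 3 statements merged into one kernel-verified Lean document; each statement's English description precedes it below -/
import Mathlib

section
/- Let c > 0, A ≥ 1, B ≥ 1, let M be a positive integer, and let ω ∈ ℝ satisfy the finite Diophantine condition ‖kω‖ > c·|k|^{−A} for all integers k with 0 < |k| ≤ M. Let u : ℝ → ℝ be 1-periodic with |u(x)| ≤ 1 for all x, admitting a subharmonic extension ũ to the strip {z ∈ ℂ : |Im z| < 1} with |ũ(z)| ≤ B. Then there exist σ = σ(A) > 0 (one may take σ = 1/(50A)), c̃ > 0, and M₀ (depending on c, A, B) such that if M ≥ M₀, the Lebesgue measure of the set {x ∈ [0,1] : |∑_{0 ≤ |m| < M} ((M−|m|)/M²)·u(x+mω) − û(0)| > M^{−σ}} is less than e^{−c̃·M^σ}, where û(0) = ∫₀¹ u. -/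
open MeasureTheory

/-- Distance from a real number to the nearest integer. -/
noncomputable def distToInt (θ : ℝ) : ℝ := |θ - round θ|

/-- A continuous function on an open set `U ⊆ ℂ` is subharmonic if its value at the
center of any closed disk contained in `U` is at most its average over the boundary
circle. -/
def Subharmonic (U : Set ℂ) (w : ℂ → ℝ) : Prop :=
  ContinuousOn w U ∧
    ∀ z₀ : ℂ, ∀ r : ℝ, 0 < r → Metric.closedBall z₀ r ⊆ U →
      w z₀ ≤ (2 * Real.pi)⁻¹ *
        ∫ t in (0:ℝ)..(2 * Real.pi), w (z₀ + r * Complex.exp (t * Complex.I))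

/-!
The Fourier coefficients of `u` are `O(B / |k|)`. To see this, integrate `ũ` along horizontal
lines against a smooth weight. The result is, up to a quadratic, a convex function of the height,
hence Lipschitz, so replacing `ũ` by its averages over circles of radius `r` costs only `O(r)` in
mean. On the other hand the weight modulated to frequency `l` is almost an eigenvector of the
symmetrised shift by `s`, with eigenvalue `cos (l s)`; for `r` of order `1 / |l|`, averaging over
circles therefore contracts the modulated integral by a fixed factor, up to `O(1 / |l|)`, and
iterating this about `|l|` times gives the decay.

The average in the theorem multiplies the `k`-th coefficient by the Fejér kernel at `k ω`, which is
`O(1 / (M d)²)` unless `‖k ω‖ < d`. By the Diophantine condition such near-returns are more than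
`L` apart, where `L` is about `M ^ (1 / (2 A))`, so the coefficients with `0 < |k| ≤ K` sum to
`O((1 / (M d)² + 1 / L) log K)`. With `K` about `exp (M ^ σ)` these frequencies contribute
uniformly less than `M ^ (-σ) / 2`, while the remaining ones have squared `L²` norm `O(1 / K)` and
are handled by Chebyshev's inequality.
-/

section

open Set Metric
open Real (circleAverage)
open scoped Real ComplexConjugate

section CircleAverage

variable {E : Type*} [NormedAddCommGroup E] [NormedSpace ℝ E]

lemma circleMap_re (c : ℂ) (r t : ℝ) : (circleMap c r t).re = c.re + r * Real.cos t := by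
  simp [circleMap, Complex.exp_re, Complex.exp_im]

lemma circleMap_im (c : ℂ) (r t : ℝ) : (circleMap c r t).im = c.im + r * Real.sin t := by
  simp [circleMap, Complex.exp_re, Complex.exp_im]

lemma norm_circleAverage_le_circleAverage {f : ℂ → E} {g : ℂ → ℝ} {c : ℂ} {r : ℝ}
    (hfg : ∀ z ∈ sphere c |r|, ‖f z‖ ≤ g z) (hg : CircleIntegrable g c r) :
    ‖circleAverage f c r‖ ≤ circleAverage g c r := by
  simp only [circleAverage, norm_smul, smul_eq_mul, norm_inv,
    Real.norm_of_nonneg Real.two_pi_pos.le]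
  gcongr
  exact intervalIntegral.norm_integral_le_of_norm_le Real.two_pi_pos.le
    (Filter.Eventually.of_forall fun t _ ↦ hfg _ (circleMap_mem_sphere' c r t)) hg

lemma circleAverage_lt_of_le_of_exists_lt {f : ℂ → ℝ} {c : ℂ} {r a : ℝ}
    (hf : ContinuousOn f (sphere c |r|)) (hle : ∀ z ∈ sphere c |r|, f z ≤ a)
    (hlt : ∃ z ∈ sphere c |r|, f z < a) : circleAverage f c r < a := by
  have h_cont : Continuous fun t ↦ a - f (circleMap c r t) :=
    continuous_const.sub (hf.comp_continuous (by fun_prop) (circleMap_mem_sphere' c r))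
  have h_exists : ∃ t ∈ Icc 0 (2 * π), 0 < a - f (circleMap c r t) := by
    obtain ⟨z, hz, hfz⟩ := hlt
    rw [← image_circleMap_Ioc] at hz
    obtain ⟨t, ht, rfl⟩ := hz
    exact ⟨t, Ioc_subset_Icc_self ht, sub_pos.2 hfz⟩
  have h_integral_pos := intervalIntegral.integral_pos Real.two_pi_pos h_cont.continuousOn
    (fun t _ ↦ sub_nonneg.2 (hle _ (circleMap_mem_sphere' c r t))) h_exists
  have h_avg : circleAverage (fun z ↦ a - f z) c r = a - circleAverage f c r := by
    rw [Real.circleAverage_fun_sub (circleIntegrable_const a c r) hf.circleIntegrable',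
      Real.circleAverage_const]
  have h_avg_pos : 0 < circleAverage (fun z ↦ a - f z) c r :=
    mul_pos (inv_pos.2 Real.two_pi_pos) h_integral_pos
  linarith

lemma circleAverage_im (c : ℂ) (r : ℝ) : circleAverage Complex.im c r = c.im := by
  rw [circleAverage]
  simp_rw [circleMap_im]
  rw [intervalIntegral.integral_add (by simp)
    (Continuous.intervalIntegrable (by fun_prop) _ _)]
  simp [field]

lemma circleAverage_im_sq (c : ℂ) (r : ℝ) :
    circleAverage (fun z ↦ z.im ^ 2) c r = c.im ^ 2 + r ^ 2 / 2 := by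
  have expand (t : ℝ) : (c.im + r * Real.sin t) ^ 2
      = c.im ^ 2 + (2 * c.im * r) * Real.sin t + r ^ 2 * Real.sin t ^ 2 := by ring
  rw [circleAverage]
  simp_rw [circleMap_im, expand]
  rw [intervalIntegral.integral_add (Continuous.intervalIntegrable (by fun_prop) _ _)
    (Continuous.intervalIntegrable (by fun_prop) _ _), intervalIntegral.integral_add (by simp)
    (Continuous.intervalIntegrable (by fun_prop) _ _)]
  simp [field]

lemma circleAverage_re_sq (c : ℂ) (r : ℝ) :
    circleAverage (fun z ↦ z.re ^ 2) c r = c.re ^ 2 + r ^ 2 / 2 := by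
  have expand (t : ℝ) : (c.re + r * Real.cos t) ^ 2
      = c.re ^ 2 + (2 * c.re * r) * Real.cos t + r ^ 2 * Real.cos t ^ 2 := by ring
  rw [circleAverage]
  simp_rw [circleMap_re, expand]
  rw [intervalIntegral.integral_add (Continuous.intervalIntegrable (by fun_prop) _ _)
    (Continuous.intervalIntegrable (by fun_prop) _ _), intervalIntegral.integral_add (by simp)
    (Continuous.intervalIntegrable (by fun_prop) _ _)]
  simp [field]

end CircleAverage

section Subharmonic

variable {U V : Set ℂ} {v w : ℂ → ℝ} {z : ℂ} {r : ℝ}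

lemma subharmonic_iff_le_circleAverage :
    Subharmonic U w ↔ ContinuousOn w U ∧
      ∀ z r, 0 < r → closedBall z r ⊆ U → w z ≤ circleAverage w z r :=
  Iff.rfl

lemma Subharmonic.le_circleAverage (hw : Subharmonic U w) (hr : 0 < r)
    (hU : closedBall z r ⊆ U) : w z ≤ circleAverage w z r :=
  hw.2 z r hr hU

lemma Subharmonic.congr_subset (hw : Subharmonic U w) (hVU : V ⊆ U) (hvw : EqOn v w V) :
    Subharmonic V v := by
  refine subharmonic_iff_le_circleAverage.2 ⟨(hw.1.mono hVU).congr hvw, fun z r hr hV ↦ ?_⟩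
  have h_sphere : EqOn v w (sphere z |r|) := fun ζ hζ ↦
    hvw (hV (sphere_subset_closedBall (abs_of_pos hr ▸ hζ)))
  rw [Real.circleAverage_congr_sphere h_sphere, hvw (hV (mem_closedBall_self hr.le))]
  exact hw.le_circleAverage hr (hV.trans hVU)

lemma circleIntegrable_of_closedBall_subset (hw : ContinuousOn w U) (hr : 0 < r)
    (hU : closedBall z r ⊆ U) : CircleIntegrable w z r :=
  (hw.mono (sphere_subset_closedBall.trans hU)).circleIntegrable hr.le

lemma Subharmonic.add (hv : Subharmonic U v) (hw : Subharmonic U w) :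
    Subharmonic U (fun z ↦ v z + w z) := by
  refine subharmonic_iff_le_circleAverage.2 ⟨hv.1.add hw.1, fun z r hr hU ↦ ?_⟩
  rw [Real.circleAverage_fun_add (circleIntegrable_of_closedBall_subset hv.1 hr hU)
    (circleIntegrable_of_closedBall_subset hw.1 hr hU)]
  exact add_le_add (hv.le_circleAverage hr hU) (hw.le_circleAverage hr hU)

lemma subharmonic_affine_im (U : Set ℂ) (p q : ℝ) : Subharmonic U (fun z ↦ p * z.im + q) := by
  refine subharmonic_iff_le_circleAverage.2 ⟨by fun_prop, fun z r _ _ ↦ le_of_eq ?_⟩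
  rw [Real.circleAverage_fun_add (Continuous.continuousOn (by fun_prop)).circleIntegrable'
    (circleIntegrable_const q z r), Real.circleAverage_const]
  congr 1
  simpa [circleAverage_im] using
    (Real.circleAverage_fun_smul (a := p) (f := Complex.im) (c := z) (R := r)).symm

lemma im_mem_Icc_of_mem_closedBall {y : ℝ} {ζ : ℂ} (hζ : ζ ∈ closedBall (y * Complex.I) r) :
    ζ.im ∈ Icc (y - r) (y + r) := by
  have h := (Complex.abs_im_le_norm _).trans (mem_closedBall_iff_norm.1 hζ)
  simp only [Complex.sub_im, Complex.mul_im, Complex.ofReal_re, Complex.I_im, Complex.ofReal_im,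
    Complex.I_re, mul_one, mul_zero, add_zero, abs_le] at h
  exact ⟨by linarith [h.1], by linarith [h.2]⟩

lemma Subharmonic.nonpos_on_Icc_of_comp_im {S : Set ℝ} {g : ℝ → ℝ} {a b : ℝ} (hab : a ≤ b)
    (hg : Subharmonic {z : ℂ | z.im ∈ S} (fun z ↦ g z.im)) (hS : Icc a b ⊆ S)
    (ha : g a ≤ 0) (hb : g b ≤ 0) : ∀ y ∈ Icc a b, g y ≤ 0 := by
  have hg_cont : ContinuousOn g (Icc a b) := by
    have : ContinuousOn ((fun z : ℂ ↦ g z.im) ∘ fun y : ℝ ↦ (y : ℂ) * Complex.I) (Icc a b) :=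
      hg.1.comp (by fun_prop) fun y hy ↦ by simpa using hS hy
    simpa [Function.comp_def] using this
  obtain ⟨m, hm, hmax⟩ := isCompact_Icc.exists_isMaxOn (nonempty_Icc.2 hab) hg_cont
  suffices hm0 : g m ≤ 0 from fun y hy ↦ (hmax hy).trans hm0
  by_contra! hpos
  have ham : a < m := hm.1.lt_of_ne fun h ↦ by subst h; linarith
  have hmb : m < b := hm.2.lt_of_ne fun h ↦ by subst h; linarith
  set r := min (m - a) (b - m) with hr_def
  have hr : 0 < r := lt_min (by linarith) (by linarith)
  have hball : ∀ ζ ∈ closedBall (m * Complex.I) r, ζ.im ∈ Icc a b := fun ζ hζ ↦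
    Icc_subset_Icc (by linarith [min_le_left (m - a) (b - m)])
      (by linarith [min_le_right (m - a) (b - m)]) (im_mem_Icc_of_mem_closedBall hζ)
  have hsphere : ∀ ζ ∈ sphere (m * Complex.I) |r|, ζ.im ∈ Icc a b := fun ζ hζ ↦
    hball ζ (sphere_subset_closedBall (abs_of_pos hr ▸ hζ))
  -- the circle touches one of the lines `im = a`, `im = b`, where `g ≤ 0`
  have h_touch : ∃ ζ ∈ sphere (m * Complex.I) |r|, g ζ.im < g m := by
    rcases min_choice (m - a) (b - m) with h | h
    · exact ⟨a * Complex.I, by simp [hr_def, h, ← sub_mul, abs_sub_comm, ← Complex.ofReal_sub],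
        by simpa using ha.trans_lt hpos⟩
    · exact ⟨b * Complex.I, by simp [hr_def, h, ← sub_mul, ← Complex.ofReal_sub],
        by simpa using hb.trans_lt hpos⟩
  have h_lt : circleAverage (fun z ↦ g z.im) (m * Complex.I) r < g m :=
    circleAverage_lt_of_le_of_exists_lt (hg_cont.comp (by fun_prop) hsphere)
      (fun ζ hζ ↦ hmax (hsphere ζ hζ)) h_touch
  have h_le := hg.le_circleAverage hr fun ζ hζ ↦ hS (hball ζ hζ)
  simp only [Complex.im_ofReal_mul, Complex.I_im, mul_one] at h_le
  exact h_lt.not_ge h_le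

lemma Subharmonic.convexOn_of_comp_im {S : Set ℝ} {g : ℝ → ℝ} (hS : Convex ℝ S)
    (hg : Subharmonic {z : ℂ | z.im ∈ S} (fun z ↦ g z.im)) : ConvexOn ℝ S g := by
  refine LinearOrder.convexOn_of_lt hS fun a ha b hb hab s t hs ht hst ↦ ?_
  set slope := (g b - g a) / (b - a) with h_slope
  have h_chord : g a + slope * (b - a) = g b := by
    rw [h_slope, div_mul_cancel₀ _ (sub_pos.2 hab).ne']; ring
  have h_sub := hg.add (subharmonic_affine_im {z | z.im ∈ S} (-slope) (slope * a - g a))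
  have h_nonpos := h_sub.nonpos_on_Icc_of_comp_im
    (g := fun y ↦ g y + (-slope * y + (slope * a - g a))) hab.le
    (hS.ordConnected.out ha hb) (by linarith) (by linarith) (s • a + t • b)
    (convex_Icc a b (left_mem_Icc.2 hab.le) (right_mem_Icc.2 hab.le) hs.le ht.le hst)
  obtain rfl : s = 1 - t := by linarith
  simp only [smul_eq_mul] at h_nonpos ⊢
  linear_combination h_nonpos + t * h_chord

lemma Subharmonic.exists_continuous_extension {H h B : ℝ} (h0 : 0 ≤ h) (hH : h < H)
    (hw : Subharmonic {z : ℂ | |z.im| < H} w) (hB : ∀ z : ℂ, |z.im| < H → |w z| ≤ B) :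
    ∃ v : ℂ → ℝ, Continuous v ∧ (∀ z, |v z| ≤ B) ∧ Subharmonic {z : ℂ | |z.im| < h} v ∧
      ∀ z : ℂ, |z.im| ≤ h → v z = w z := by
  let clamp (z : ℂ) : ℂ := z.re + (max (-h) (min h z.im) : ℝ) * Complex.I
  have h_clamp_mem (z : ℂ) : |(clamp z).im| < H := by
    have : |max (-h) (min h z.im)| ≤ h :=
      abs_le.2 ⟨le_max_left _ _, max_le (by linarith) (min_le_left _ _)⟩
    simpa [clamp] using this.trans_lt hH
  have h_eq (z : ℂ) (hz : |z.im| ≤ h) : w (clamp z) = w z := by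
    rw [abs_le] at hz
    simp [clamp, min_eq_right hz.2, max_eq_right hz.1]
  refine ⟨w ∘ clamp, hw.1.comp_continuous (by fun_prop) h_clamp_mem,
    fun z ↦ hB _ (h_clamp_mem z), hw.congr_subset (fun z hz ↦ ?_) (fun z hz ↦ ?_), h_eq⟩
  · exact lt_trans hz hH
  · exact h_eq z (le_of_lt hz)

end Subharmonic

section SliceIntegral

variable {E : Type*} [NormedAddCommGroup E] [NormedSpace ℝ E]

/-- The integral of `w` against the weight `ψ` along the horizontal line through `z`, with `ψ`
centred at `z`. As a function of `z` it inherits mean value inequalities from `w`. -/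
noncomputable def sliceIntegral (w : ℂ → ℝ) (ψ : ℝ → E) (z : ℂ) : E :=
  ∫ x : ℝ, w (x + z) • ψ x

/-- The average of the translates of `ψ` by `s` and by `-s`. -/
noncomputable def symmShift (ψ : ℝ → E) (s x : ℝ) : E :=
  (2⁻¹ : ℝ) • (ψ (x + s) + ψ (x - s))

variable {v w : ℂ → ℝ} {B : ℝ} {φ ψ : ℝ → E}

lemma integrable_slice (hw : Continuous w) (hB : ∀ z, |w z| ≤ B) (hψ : Integrable ψ) (z : ℂ) :
    Integrable (fun x : ℝ ↦ w (x + z) • ψ x) :=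
  hψ.bdd_smul B (by fun_prop) (Filter.Eventually.of_forall fun x ↦ hB _)

lemma norm_sliceIntegral_le (hB : ∀ z, |w z| ≤ B) (hψ : Integrable ψ) (z : ℂ) :
    ‖sliceIntegral w ψ z‖ ≤ B * ∫ x, ‖ψ x‖ := by
  rw [← integral_const_mul]
  refine norm_integral_le_of_norm_le (hψ.norm.const_mul B) (Filter.Eventually.of_forall fun x ↦ ?_)
  rw [norm_smul]
  gcongr
  exact hB _

lemma continuous_sliceIntegral (hw : Continuous w) (hB : ∀ z, |w z| ≤ B) (hψ : Integrable ψ) :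
    Continuous (sliceIntegral w ψ) := by
  refine continuous_of_dominated (bound := fun x ↦ B * ‖ψ x‖)
    (fun z ↦ (integrable_slice hw hB hψ z).aestronglyMeasurable)
    (fun z ↦ Filter.Eventually.of_forall fun x ↦ ?_) (hψ.norm.const_mul B)
    (Filter.Eventually.of_forall fun x ↦ by fun_prop)
  rw [norm_smul]
  gcongr
  exact hB _

lemma sliceIntegral_comp_add (s : ℝ) (z : ℂ) :
    sliceIntegral w (fun x ↦ ψ (x + s)) z = sliceIntegral w ψ (z - s) := by
  rw [sliceIntegral, sliceIntegral,
    ← integral_add_right_eq_self (fun x : ℝ ↦ w (x + (z - s)) • ψ x) s]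
  simp [add_assoc]

lemma sliceIntegral_sub (hv : Continuous v) (hw : Continuous w) {B' : ℝ} (hB : ∀ z, |v z| ≤ B)
    (hB' : ∀ z, |w z| ≤ B') (hψ : Integrable ψ) (z : ℂ) :
    sliceIntegral (fun ζ ↦ v ζ - w ζ) ψ z = sliceIntegral v ψ z - sliceIntegral w ψ z := by
  simp only [sliceIntegral, sub_smul]
  exact integral_sub (integrable_slice hv hB hψ z) (integrable_slice hw hB' hψ z)

lemma sliceIntegral_sub_smul_weight (hw : Continuous w) (hB : ∀ z, |w z| ≤ B)
    (hφ : Integrable φ) (hψ : Integrable ψ) (a : ℝ) (z : ℂ) :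
    sliceIntegral w (fun x ↦ φ x - a • ψ x) z
      = sliceIntegral w φ z - a • sliceIntegral w ψ z := by
  simp only [sliceIntegral]
  rw [← integral_smul, ← integral_sub (integrable_slice hw hB hφ z)
    ((integrable_slice hw hB hψ z).fun_smul a)]
  simp only [smul_sub, smul_comm a]

lemma sliceIntegral_symmShift (hw : Continuous w) (hB : ∀ z, |w z| ≤ B) (hψ : Integrable ψ)
    (s : ℝ) (z : ℂ) :
    sliceIntegral w (symmShift ψ s) z
      = (2⁻¹ : ℝ) • (sliceIntegral w ψ (z - s) + sliceIntegral w ψ (z + s)) := by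
  have h_neg := sliceIntegral_comp_add (w := w) (ψ := ψ) (-s) z
  simp only [Complex.ofReal_neg, sub_neg_eq_add, ← sub_eq_add_neg] at h_neg
  rw [← h_neg, ← sliceIntegral_comp_add, sliceIntegral, sliceIntegral, sliceIntegral,
    ← integral_add (integrable_slice hw hB (hψ.comp_add_right s) z)
      (integrable_slice hw hB (hψ.comp_sub_right s) z), ← integral_smul]
  simp only [symmShift, smul_add, smul_comm (2⁻¹ : ℝ)]

lemma continuous_circleAverage_center (hw : Continuous w) (r : ℝ) :
    Continuous fun z ↦ circleAverage w z r := by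
  have h_cont : Continuous fun z ↦ ∫ t in 0..2 * π, w (circleMap z r t) := by
    refine intervalIntegral.continuous_parametric_intervalIntegral_of_continuous' ?_ 0 (2 * π)
    simp only [Function.uncurry_def, circleMap]
    fun_prop
  exact h_cont.const_smul (2 * π)⁻¹

lemma abs_circleAverage_le (hB : ∀ z, |w z| ≤ B) (z : ℂ) (r : ℝ) :
    |circleAverage w z r| ≤ B :=
  (norm_circleAverage_le_circleAverage (f := w) (fun ζ _ ↦ hB ζ)
    (circleIntegrable_const B z r)).trans_eq (Real.circleAverage_const B z r)

lemma sliceIntegral_circleAverage [CompleteSpace E] (hw : Continuous w)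
    (hB : ∀ z, |w z| ≤ B) (hψ : Integrable ψ) (z : ℂ) (r : ℝ) :
    sliceIntegral (fun ζ ↦ circleAverage w ζ r) ψ z = circleAverage (sliceIntegral w ψ) z r := by
  have : IsFiniteMeasure (volume.restrict (uIoc 0 (2 * π))) := by rw [uIoc]; infer_instance
  have h_int : Integrable (Function.uncurry fun (t x : ℝ) ↦ w (x + circleMap z r t) • ψ x)
      ((volume.restrict (uIoc 0 (2 * π))).prod volume) :=
    (hψ.comp_snd _).bdd_smul B (by fun_prop) (Filter.Eventually.of_forall fun p ↦ hB _)
  simp only [circleAverage, sliceIntegral]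
  rw [intervalIntegral_integral_swap h_int, ← integral_smul]
  congr! 2 with x
  simp only [smul_eq_mul, mul_smul, circleMap, add_assoc, intervalIntegral.integral_smul_const]

lemma circleAverage_comp_neg_conj (f : ℂ → E) (z : ℂ) (r : ℝ) :
    circleAverage (fun ζ ↦ f (-conj ζ)) z r = circleAverage f (-conj z) r := by
  have h_reflect (t : ℝ) : -conj (circleMap z r t) = circleMap (-conj z) r (π - t) := by
    simp only [Complex.ext_iff, circleMap_re, circleMap_im, Complex.neg_re, Complex.neg_im,
      Complex.conj_re, Complex.conj_im, Real.cos_pi_sub, Real.sin_pi_sub]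
    constructor <;> ring
  have h_periodic : Function.Periodic (fun t ↦ f (circleMap (-conj z) r t)) (2 * π) :=
    fun t ↦ by simp only [periodic_circleMap _ r t]
  simp only [circleAverage, h_reflect]
  rw [intervalIntegral.integral_comp_sub_left (fun t ↦ f (circleMap (-conj z) r t))]
  have h_shift := h_periodic.intervalIntegral_add_eq (π - 2 * π) 0
  rw [sub_add_cancel, zero_add] at h_shift
  rw [sub_zero, h_shift]

lemma circleAverage_eq_circleAverage_symm {f : ℂ → E} (hf : Continuous f) (y r : ℝ) :
    circleAverage f (y * Complex.I) r
      = circleAverage (fun ζ ↦ (2⁻¹ : ℝ) • (f (-conj ζ) + f ζ)) (y * Complex.I) r := by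
  rw [Real.circleAverage_fun_smul, Real.circleAverage_fun_add
    (Continuous.continuousOn (by fun_prop)).circleIntegrable' hf.continuousOn.circleIntegrable',
    circleAverage_comp_neg_conj]
  simp [← two_smul ℝ]

/-- If `ψ` is, up to an `L¹` error `ε`, an eigenvector of symmetrised shifts by at most `r`, then
circle averages of its slice integrals only involve the values on the imaginary axis. -/
lemma norm_circleAverage_sliceIntegral_sub_le {a : ℝ → ℝ} {r ε : ℝ} (ha : Continuous a)
    (hw : Continuous w) (hB : ∀ z, |w z| ≤ B) (hψ : Integrable ψ)
    (hε : ∀ s, |s| ≤ |r| → ∫ x, ‖symmShift ψ s x - a s • ψ x‖ ≤ ε) (y : ℝ) :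
    ‖circleAverage (sliceIntegral w ψ) (y * Complex.I) r - circleAverage
      (fun ζ ↦ a ζ.re • sliceIntegral w ψ (ζ.im * Complex.I)) (y * Complex.I) r‖ ≤ B * ε := by
  have h_cont := continuous_sliceIntegral hw hB hψ
  rw [circleAverage_eq_circleAverage_symm h_cont, ← Real.circleAverage_fun_sub
    (Continuous.continuousOn (by fun_prop)).circleIntegrable'
    (Continuous.continuousOn (by fun_prop)).circleIntegrable', ← Real.circleAverage_const (B * ε)]
  refine norm_circleAverage_le_circleAverage (fun ζ hζ ↦ ?_) (circleIntegrable_const _ _ _)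
  have h_re : |ζ.re| ≤ |r| := by
    simpa using (Complex.abs_re_le_norm _).trans_eq (mem_sphere_iff_norm.1 hζ)
  have h_symm : Integrable (symmShift ψ ζ.re) :=
    ((hψ.comp_add_right _).add (hψ.comp_sub_right _)).smul _
  have h_neg_conj : -conj ζ = ζ.im * Complex.I - ζ.re := by simp [Complex.ext_iff]
  have h_self : ζ = ζ.im * Complex.I + ζ.re := by simp [Complex.ext_iff]
  have h_split : (2⁻¹ : ℝ) • (sliceIntegral w ψ (-conj ζ) + sliceIntegral w ψ ζ)
      = sliceIntegral w (symmShift ψ ζ.re) (ζ.im * Complex.I) := by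
    rw [sliceIntegral_symmShift hw hB hψ, ← h_neg_conj, ← h_self]
  rw [h_split, ← sliceIntegral_sub_smul_weight hw hB h_symm hψ]
  exact (norm_sliceIntegral_le hB (h_symm.sub (hψ.smul _)) _).trans
    (mul_le_mul_of_nonneg_left (hε _ h_re) ((abs_nonneg _).trans (hB 0)))

end SliceIntegral

section SmoothWeight

variable {E : Type*} [NormedAddCommGroup E]

lemma integral_norm_le_of_eq_zero_off_Icc {f : ℝ → E} {R K : ℝ} (hR : 0 ≤ R)
    (hf0 : ∀ x, R < |x| → f x = 0) (hfK : ∀ x, ‖f x‖ ≤ K) : ∫ x, ‖f x‖ ≤ K * (2 * R) := by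
  have h_off (x : ℝ) (hx : x ∉ Icc (-R) R) : ‖f x‖ = 0 := by
    rw [hf0 x (not_le.1 fun h ↦ hx (abs_le.1 h)), norm_zero]
  calc ∫ x, ‖f x‖ = ‖∫ x in Icc (-R) R, ‖f x‖‖ := by
        rw [setIntegral_eq_integral_of_forall_compl_eq_zero h_off,
          Real.norm_of_nonneg (by positivity)]
    _ ≤ K * volume.real (Icc (-R) R) :=
        norm_setIntegral_le_of_norm_le_const measure_Icc_lt_top fun x _ ↦ by simpa using hfK x
    _ = K * (2 * R) := by rw [Real.volume_real_Icc_of_le (by linarith)]; ring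

variable {φ : ℝ → ℝ}

lemma exists_eq_zero_of_lt_abs (hφ : HasCompactSupport φ) :
    ∃ R, 0 ≤ R ∧ ∀ x, R < |x| → φ x = 0 := by
  obtain ⟨R, hR0, hR⟩ := hφ.isCompact.isBounded.subset_closedBall_lt 0 0
  refine ⟨R, hR0.le, fun x hx ↦ image_eq_zero_of_notMem_tsupport fun h ↦ ?_⟩
  exact hx.not_ge (by simpa using hR h)

lemma exists_integral_norm_shift_sub_le (hφ : ContDiff ℝ 1 φ) (hc : HasCompactSupport φ) :
    ∃ C, 0 ≤ C ∧ ∀ s, |s| ≤ 1 → ∫ x, ‖φ (x + s) - φ x‖ ≤ C * |s| := by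
  obtain ⟨K, hK⟩ := hφ.lipschitzWith_of_hasCompactSupport hc one_ne_zero
  obtain ⟨R, hR0, hR⟩ := exists_eq_zero_of_lt_abs hc
  refine ⟨K * (2 * (R + 1)), by positivity, fun s hs ↦ ?_⟩
  have h_off (x : ℝ) (hx : R + 1 < |x|) : φ (x + s) - φ x = 0 := by
    have : |x| ≤ |x + s| + |s| := by simpa using abs_sub (x + s) s
    rw [hR x (by linarith), hR (x + s) (by linarith), sub_zero]
  have h_pointwise (x : ℝ) : ‖φ (x + s) - φ x‖ ≤ K * |s| := by
    simpa using hK.norm_sub_le (x + s) x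
  exact (integral_norm_le_of_eq_zero_off_Icc (by linarith) h_off h_pointwise).trans_eq (by ring)

lemma norm_symmShift_sub_le {K : NNReal} (hφ : Differentiable ℝ φ) (hK : LipschitzWith K (deriv φ))
    (s x : ℝ) : ‖symmShift φ s x - φ x‖ ≤ K * s ^ 2 := by
  let g (t : ℝ) := φ (x + t) + φ (x - t)
  have h_deriv (t : ℝ) : HasDerivAt g (deriv φ (x + t) - deriv φ (x - t)) t := by
    rw [sub_eq_add_neg]
    exact ((hφ (x + t)).hasDerivAt.comp_const_add x t).add
      ((hφ (x - t)).hasDerivAt.comp_const_sub x t)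
  have h_bound (t : ℝ) (ht : t ∈ uIcc 0 s) :
      ‖deriv φ (x + t) - deriv φ (x - t)‖ ≤ 2 * K * |s| := by
    have h_abs : |t| ≤ |s| := by simpa using abs_sub_left_of_mem_uIcc ht
    calc ‖deriv φ (x + t) - deriv φ (x - t)‖ ≤ K * ‖(x + t) - (x - t)‖ := hK.norm_sub_le _ _
      _ = 2 * K * |t| := by
          rw [show x + t - (x - t) = 2 * t by ring, norm_mul, Real.norm_eq_abs t]
          norm_num
          ring
      _ ≤ 2 * K * |s| := by gcongr
  have h_mvt := (convex_uIcc 0 s).norm_image_sub_le_of_norm_hasDerivWithin_le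
    (fun t _ ↦ (h_deriv t).hasDerivWithinAt) h_bound left_mem_uIcc right_mem_uIcc
  have h_half : symmShift φ s x - φ x = 2⁻¹ * (g s - g 0) := by simp [symmShift, g]; ring
  rw [h_half, norm_mul]
  calc ‖(2⁻¹ : ℝ)‖ * ‖g s - g 0‖ ≤ 2⁻¹ * (2 * K * |s| * ‖s - 0‖) := by
        gcongr
        norm_num
    _ = K * s ^ 2 := by rw [sub_zero, Real.norm_eq_abs, ← sq_abs]; ring

lemma exists_integral_norm_symmShift_sub_le (hφ : ContDiff ℝ 2 φ) (hc : HasCompactSupport φ) :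
    ∃ C, 0 ≤ C ∧ ∀ s, |s| ≤ 1 → ∫ x, ‖symmShift φ s x - φ x‖ ≤ C * s ^ 2 := by
  have h_deriv : ContDiff ℝ 1 (deriv φ) := hφ.deriv'
  obtain ⟨K, hK⟩ := h_deriv.lipschitzWith_of_hasCompactSupport hc.deriv one_ne_zero
  obtain ⟨R, hR0, hR⟩ := exists_eq_zero_of_lt_abs hc
  refine ⟨K * (2 * (R + 1)), by positivity, fun s hs ↦ ?_⟩
  have h_off (x : ℝ) (hx : R + 1 < |x|) : symmShift φ s x - φ x = 0 := by
    have h_add : |x| ≤ |x + s| + |s| := by simpa using abs_sub (x + s) s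
    have h_sub : |x| ≤ |x - s| + |s| := by simpa using abs_add_le (x - s) s
    simp [symmShift, hR x (by linarith), hR (x + s) (by linarith), hR (x - s) (by linarith)]
  exact (integral_norm_le_of_eq_zero_off_Icc (by linarith) h_off
    (norm_symmShift_sub_le (hφ.differentiable two_ne_zero) hK s)).trans_eq (by ring)

end SmoothWeight

section Convexity

variable {w : ℂ → ℝ} {B h C : ℝ} {φ : ℝ → ℝ}

lemma closedBall_subset_strip_iff {z : ℂ} {r : ℝ} (hr : 0 ≤ r) :
    closedBall z r ⊆ {ζ : ℂ | |ζ.im| < h} ↔ |z.im| + r < h := by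
  refine ⟨fun hz ↦ ?_, fun hz ζ hζ ↦ ?_⟩
  · have h_top : z + r * Complex.I ∈ closedBall z r := by simp [abs_of_nonneg hr]
    have h_bot : z - r * Complex.I ∈ closedBall z r := by simp [abs_of_nonneg hr]
    have h_top_im : |z.im + r| < h := by simpa using hz h_top
    have h_bot_im : |z.im - r| < h := by simpa using hz h_bot
    cases abs_cases z.im <;> linarith [(abs_lt.1 h_top_im).2, (abs_lt.1 h_bot_im).1]
  · have h_dist : |ζ.im - z.im| ≤ r :=
      (Complex.abs_im_le_norm (ζ - z)).trans (mem_closedBall_iff_norm.1 hζ)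
    have h_tri : |ζ.im| ≤ |z.im| + |ζ.im - z.im| := by simpa using abs_add_le z.im (ζ.im - z.im)
    exact show |ζ.im| < h by linarith

lemma circleAverage_comp_im {E : Type*} [NormedAddCommGroup E] [NormedSpace ℝ E] (g : ℝ → E)
    (z : ℂ) (r : ℝ) :
    circleAverage (fun ζ ↦ g ζ.im) z r = circleAverage (fun ζ ↦ g ζ.im) (z.im * Complex.I) r := by
  simp [circleAverage, circleMap_im]

lemma subharmonic_sliceIntegral (hs : Subharmonic {z : ℂ | |z.im| < h} w) (hw : Continuous w)
    (hB : ∀ z, |w z| ≤ B) (hφ : Integrable φ) (hφ0 : ∀ x, 0 ≤ φ x) :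
    Subharmonic {z : ℂ | |z.im| < h} (sliceIntegral w φ) := by
  refine subharmonic_iff_le_circleAverage.2
    ⟨(continuous_sliceIntegral hw hB hφ).continuousOn, fun z r hr hz ↦ ?_⟩
  rw [← sliceIntegral_circleAverage hw hB hφ]
  refine integral_mono (integrable_slice hw hB hφ z)
    (integrable_slice (continuous_circleAverage_center hw r) (abs_circleAverage_le hB · r) hφ z)
    fun x ↦ mul_le_mul_of_nonneg_right (hs.le_circleAverage hr ?_) (hφ0 x)
  rw [closedBall_subset_strip_iff hr.le] at hz ⊢
  simpa using hz

lemma circleAverage_sliceIntegral_le {r : ℝ} (hw : Continuous w) (hB : ∀ z, |w z| ≤ B)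
    (hφ : Integrable φ) (hC0 : 0 ≤ C)
    (hC : ∀ s, |s| ≤ 1 → ∫ x, ‖symmShift φ s x - φ x‖ ≤ C * s ^ 2) (hr : |r| ≤ 1) (y : ℝ) :
    circleAverage (sliceIntegral w φ) (y * Complex.I) r
      ≤ circleAverage (fun ζ ↦ sliceIntegral w φ (ζ.im * Complex.I)) (y * Complex.I) r
        + B * C * r ^ 2 := by
  have h_eigen (s : ℝ) (hs : |s| ≤ |r|) :
      ∫ x, ‖symmShift φ s x - (1 : ℝ) • φ x‖ ≤ C * r ^ 2 := by
    simp only [one_smul]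
    refine (hC s (hs.trans hr)).trans ?_
    gcongr ?_ * ?_
    exact sq_le_sq.2 hs
  have := norm_circleAverage_sliceIntegral_sub_le (a := fun _ ↦ 1) continuous_const hw hB hφ
    h_eigen y
  simp only [one_smul, Real.norm_eq_abs] at this
  linarith [le_abs_self (circleAverage (sliceIntegral w φ) (y * Complex.I) r
    - circleAverage (fun ζ ↦ sliceIntegral w φ (ζ.im * Complex.I)) (y * Complex.I) r)]

/-- Moving the horizontal displacement of the circle from `w` to `φ` costs `O(r ^ 2)`, which the
circle average of `im ^ 2` compensates. -/
lemma subharmonic_sliceIntegral_im_add_sq (hs : Subharmonic {z : ℂ | |z.im| < h} w) (h1 : h ≤ 1)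
    (hw : Continuous w) (hB : ∀ z, |w z| ≤ B) (hφ : Integrable φ) (hφ0 : ∀ x, 0 ≤ φ x) (hC0 : 0 ≤ C)
    (hC : ∀ s, |s| ≤ 1 → ∫ x, ‖symmShift φ s x - φ x‖ ≤ C * s ^ 2) :
    Subharmonic {z : ℂ | |z.im| < h}
      (fun z ↦ sliceIntegral w φ (z.im * Complex.I) + 2 * B * C * z.im ^ 2) := by
  have h_cont := continuous_sliceIntegral hw hB hφ
  refine subharmonic_iff_le_circleAverage.2 ⟨by fun_prop, fun z r hr hz ↦ ?_⟩
  rw [closedBall_subset_strip_iff hr.le] at hz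
  have hr1 : |r| ≤ 1 := by rw [abs_of_pos hr]; linarith [abs_nonneg z.im]
  have h_upper : sliceIntegral w φ (z.im * Complex.I)
      ≤ circleAverage (sliceIntegral w φ) (z.im * Complex.I) r :=
    (subharmonic_sliceIntegral hs hw hB hφ hφ0).le_circleAverage hr
      ((closedBall_subset_strip_iff hr.le).2 (by simpa using hz))
  have h_shift := circleAverage_sliceIntegral_le hw hB hφ hC0 hC hr1 z.im
  have h_sq : circleAverage (fun ζ ↦ 2 * B * C * ζ.im ^ 2) (z.im * Complex.I) r
      = 2 * B * C * z.im ^ 2 + B * C * r ^ 2 := by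
    have := Real.circleAverage_fun_smul (a := 2 * B * C) (f := fun ζ : ℂ ↦ ζ.im ^ 2)
      (c := z.im * Complex.I) (R := r)
    simp only [smul_eq_mul, circleAverage_im_sq] at this
    rw [this]
    simp
    ring
  rw [circleAverage_comp_im (fun y : ℝ ↦ sliceIntegral w φ (y * Complex.I) + 2 * B * C * y ^ 2),
    Real.circleAverage_fun_add (Continuous.continuousOn (by fun_prop)).circleIntegrable'
      (Continuous.continuousOn (by fun_prop)).circleIntegrable', h_sq]
  linarith

lemma abs_sliceIntegral_sub_le {δ y y' : ℝ} (hs : Subharmonic {z : ℂ | |z.im| < h} w) (h1 : h ≤ 1)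
    (hw : Continuous w) (hB : ∀ z, |w z| ≤ B) (hφ : Integrable φ) (hφ0 : ∀ x, 0 ≤ φ x)
    (hC0 : 0 ≤ C) (hC : ∀ s, |s| ≤ 1 → ∫ x, ‖symmShift φ s x - φ x‖ ≤ C * s ^ 2)
    (hδ : 0 < δ) (hy : |y| < h - δ) (hy' : |y'| < h - δ) :
    |sliceIntegral w φ (y * Complex.I) - sliceIntegral w φ (y' * Complex.I)|
      ≤ B * (2 * ((∫ x, ‖φ x‖) + 2 * C) / δ + 4 * C) * |y - y'| := by
  have hB0 : 0 ≤ B := (abs_nonneg _).trans (hB 0)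
  set G : ℝ → ℝ := fun y ↦ sliceIntegral w φ (y * Complex.I)
  set M := B * ((∫ x, ‖φ x‖) + 2 * C) with hM
  have h_convex : ConvexOn ℝ (ball 0 h) fun y ↦ G y + 2 * B * C * y ^ 2 := by
    refine Subharmonic.convexOn_of_comp_im (convex_ball 0 h) ?_
    simpa using subharmonic_sliceIntegral_im_add_sq hs h1 hw hB hφ hφ0 hC0 hC
  have h_bound (t : ℝ) (ht : dist t 0 < h) : |G t + 2 * B * C * t ^ 2| ≤ M := by
    rw [Real.dist_0_eq_abs] at ht
    have h_sq : |2 * B * C * t ^ 2| ≤ 2 * B * C := by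
      rw [abs_of_nonneg (by positivity)]
      exact mul_le_of_le_one_right (by positivity) ((sq_le_one_iff_abs_le_one t).2 (by linarith))
    have h_slice : |G t| ≤ B * ∫ x, ‖φ x‖ := norm_sliceIntegral_le hB hφ _
    rw [hM]
    linarith [abs_add_le (G t) (2 * B * C * t ^ 2)]
  have h_lip := (h_convex.lipschitzOnWith_of_abs_le hδ h_bound).norm_sub_le
    (x := y) (y := y') (by simpa using hy) (by simpa using hy')
  have h_sq_sub : |y ^ 2 - y' ^ 2| ≤ 2 * |y - y'| := by
    rw [sq_sub_sq, abs_mul]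
    gcongr
    linarith [abs_add_le y y']
  rw [Real.coe_toNNReal _ (by positivity), Real.norm_eq_abs, Real.norm_eq_abs] at h_lip
  have h_split : G y - G y' = (G y + 2 * B * C * y ^ 2 - (G y' + 2 * B * C * y' ^ 2))
      - 2 * B * C * (y ^ 2 - y' ^ 2) := by ring
  calc |G y - G y'| ≤ 2 * M / δ * |y - y'| + 2 * B * C * (2 * |y - y'|) := by
        rw [h_split]
        refine (abs_sub _ _).trans (add_le_add h_lip ?_)
        rw [abs_mul, abs_of_nonneg (by positivity : 0 ≤ 2 * B * C)]
        gcongr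
    _ = B * (2 * ((∫ x, ‖φ x‖) + 2 * C) / δ + 4 * C) * |y - y'| := by rw [hM]; ring

/-- On average over `φ`, the Riesz mass of `w` in disks of radius `r` is `O(r)`. -/
lemma sliceIntegral_circleAverage_sub_le {δ y r : ℝ} (hs : Subharmonic {z : ℂ | |z.im| < h} w)
    (h1 : h ≤ 1) (hw : Continuous w) (hB : ∀ z, |w z| ≤ B) (hφ : Integrable φ)
    (hφ0 : ∀ x, 0 ≤ φ x) (hC0 : 0 ≤ C)
    (hC : ∀ s, |s| ≤ 1 → ∫ x, ‖symmShift φ s x - φ x‖ ≤ C * s ^ 2)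
    (hδ : 0 < δ) (hr : 0 < r) (hyr : |y| + r < h - δ) :
    sliceIntegral (fun ζ ↦ circleAverage w ζ r - w ζ) φ (y * Complex.I)
      ≤ B * (2 * ((∫ x, ‖φ x‖) + 2 * C) / δ + 5 * C) * r := by
  have hB0 : 0 ≤ B := (abs_nonneg _).trans (hB 0)
  have hr1 : |r| ≤ 1 := by rw [abs_of_pos hr]; linarith [abs_nonneg y]
  set L := B * (2 * ((∫ x, ‖φ x‖) + 2 * C) / δ + 4 * C)
  have h_cont := continuous_sliceIntegral hw hB hφ
  have h_circle : circleAverage (fun ζ ↦ sliceIntegral w φ (ζ.im * Complex.I)) (y * Complex.I) r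
      ≤ sliceIntegral w φ (y * Complex.I) + L * r := by
    refine Real.circleAverage_mono_on_of_le_circle
      (Continuous.continuousOn (by fun_prop)).circleIntegrable' fun ζ hζ ↦ ?_
    have h_im : |ζ.im - y| ≤ r := by
      simpa [abs_of_pos hr] using (Complex.abs_im_le_norm _).trans_eq (mem_sphere_iff_norm.1 hζ)
    have h_lip := abs_sliceIntegral_sub_le (y := ζ.im) (y' := y) hs h1 hw hB hφ hφ0 hC0 hC hδ
      (by linarith [abs_sub_abs_le_abs_sub ζ.im y]) (by linarith)
    have : L * |ζ.im - y| ≤ L * r := by gcongr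
    linarith [le_abs_self (sliceIntegral w φ (ζ.im * Complex.I)
      - sliceIntegral w φ (y * Complex.I))]
  have h_shift := circleAverage_sliceIntegral_le hw hB hφ hC0 hC hr1 y
  have h_sq : B * C * r ^ 2 ≤ B * C * r := by
    gcongr
    nlinarith [abs_of_pos hr]
  rw [sliceIntegral_sub (continuous_circleAverage_center hw r) hw (abs_circleAverage_le hB · r)
    hB hφ, sliceIntegral_circleAverage hw hB hφ]
  linear_combination h_circle + h_shift + h_sq

end Convexity

section Modulation

/-- The weight `φ` modulated to frequency `l`. -/
noncomputable def modulate (φ : ℝ → ℝ) (l x : ℝ) : ℂ := φ x * Complex.exp ((l * x : ℝ) * Complex.I)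

variable {w : ℂ → ℝ} {B C l r y : ℝ} {φ : ℝ → ℝ}

lemma norm_modulate (φ : ℝ → ℝ) (l x : ℝ) : ‖modulate φ l x‖ = ‖φ x‖ := by
  rw [modulate, norm_mul, Complex.norm_exp_ofReal_mul_I, mul_one, Complex.norm_real]

lemma integrable_modulate (hφ : Integrable φ) (l : ℝ) : Integrable (modulate φ l) :=
  hφ.ofReal.mul_bdd (c := 1) (by fun_prop)
    (Filter.Eventually.of_forall fun x ↦ (Complex.norm_exp_ofReal_mul_I _).le)

lemma norm_sliceIntegral_modulate_le {z : ℂ} (hw : ∀ x : ℝ, 0 ≤ w (x + z)) (hφ : ∀ x, 0 ≤ φ x) :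
    ‖sliceIntegral w (modulate φ l) z‖ ≤ sliceIntegral w φ z := by
  refine (norm_integral_le_integral_norm _).trans_eq (integral_congr_ae ?_)
  refine Filter.Eventually.of_forall fun x ↦ ?_
  simp only [norm_smul, norm_modulate, Real.norm_of_nonneg (hw x), Real.norm_of_nonneg (hφ x),
    smul_eq_mul]

lemma norm_symmShift_modulate_sub_le (φ : ℝ → ℝ) (l s x : ℝ) :
    ‖symmShift (modulate φ l) s x - Real.cos (l * s) • modulate φ l x‖
      ≤ 2⁻¹ * (‖φ (x + s) - φ x‖ + ‖φ (x + -s) - φ x‖) := by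
  let e (x : ℝ) : ℂ := Complex.exp ((l * x : ℝ) * Complex.I)
  have h_norm (x : ℝ) : ‖e x‖ = 1 := Complex.norm_exp_ofReal_mul_I _
  have h_add (x t : ℝ) : e (x + t) = e x * e t := by
    simp only [e, ← Complex.exp_add]; push_cast; ring_nf
  have h_cos : ((Real.cos (l * s) : ℝ) : ℂ) = 2⁻¹ * (e s + e (-s)) := by
    simp only [e, Complex.ofReal_cos, Complex.cos]; push_cast; ring_nf
  have h_diff : symmShift (modulate φ l) s x - Real.cos (l * s) • modulate φ l x
      = (2⁻¹ : ℝ) * (e x * ((φ (x + s) - φ x : ℝ) * e s + (φ (x + -s) - φ x : ℝ) * e (-s))) := by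
    rw [Complex.real_smul, h_cos, symmShift, Complex.real_smul, sub_eq_add_neg x s]
    change ((2⁻¹ : ℝ) : ℂ) * (φ (x + s) * e (x + s) + φ (x + -s) * e (x + -s))
      - 2⁻¹ * (e s + e (-s)) * (φ x * e x) = _
    rw [h_add, h_add]
    push_cast
    ring
  rw [h_diff, norm_mul, norm_mul, h_norm, one_mul, Complex.norm_real, Real.norm_of_nonneg (by simp)]
  gcongr
  refine (norm_add_le _ _).trans_eq ?_
  rw [norm_mul, norm_mul, h_norm, h_norm, Complex.norm_real, Complex.norm_real, mul_one, mul_one]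

lemma integral_norm_symmShift_modulate_sub_le {s : ℝ} (hφ : Integrable φ)
    (hC : ∀ s, |s| ≤ 1 → ∫ x, ‖φ (x + s) - φ x‖ ≤ C * |s|) (l : ℝ) (hs : |s| ≤ 1) :
    ∫ x, ‖symmShift (modulate φ l) s x - Real.cos (l * s) • modulate φ l x‖ ≤ C * |s| := by
  have h_int (t : ℝ) : Integrable fun x ↦ ‖φ (x + t) - φ x‖ := ((hφ.comp_add_right t).sub hφ).norm
  calc ∫ x, ‖symmShift (modulate φ l) s x - Real.cos (l * s) • modulate φ l x‖
      ≤ ∫ x, 2⁻¹ * (‖φ (x + s) - φ x‖ + ‖φ (x + -s) - φ x‖) :=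
        integral_mono_of_nonneg (Filter.Eventually.of_forall fun x ↦ norm_nonneg _)
          (((h_int s).add (h_int (-s))).const_mul _)
          (Filter.Eventually.of_forall fun x ↦ norm_symmShift_modulate_sub_le φ l s x)
    _ = 2⁻¹ * ((∫ x, ‖φ (x + s) - φ x‖) + ∫ x, ‖φ (x + -s) - φ x‖) := by
        rw [integral_const_mul, integral_add (h_int s) (h_int (-s))]
    _ ≤ 2⁻¹ * (C * |s| + C * |-s|) := by
        gcongr
        exacts [hC s hs, hC (-s) (by rwa [abs_neg])]
    _ = C * |s| := by rw [abs_neg]; ring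

lemma abs_cos_le_one_sub_mul_sq {x : ℝ} (hx : |x| ≤ π / 2) :
    |Real.cos x| ≤ 1 - 2 / π ^ 2 * x ^ 2 := by
  rw [abs_of_nonneg (Real.cos_nonneg_of_mem_Icc (abs_le.1 hx))]
  exact Real.cos_le_one_sub_mul_cos_sq (by linarith [Real.pi_pos])

lemma norm_circleAverage_cos_smul_le {b : ℝ → ℂ} {S : ℝ} (hlr : |l| * r = 1)
    (hS : ∀ t, |t - y| ≤ r → ‖b t‖ ≤ S) :
    ‖circleAverage (fun ζ ↦ Real.cos (l * ζ.re) • b ζ.im) (y * Complex.I) r‖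
      ≤ (1 - 1 / π ^ 2) * S := by
  have hr : 0 < r := pos_of_mul_pos_right (hlr ▸ one_pos) (abs_nonneg l)
  have h_pointwise (ζ : ℂ) (hζ : ζ ∈ sphere (y * Complex.I) |r|) :
      ‖Real.cos (l * ζ.re) • b ζ.im‖ ≤ S - (2 / π ^ 2 * l ^ 2 * S) * ζ.re ^ 2 := by
    rw [mem_sphere_iff_norm, abs_of_pos hr] at hζ
    have h_re : |ζ.re| ≤ r := by simpa using (Complex.abs_re_le_norm _).trans_eq hζ
    have h_im : |ζ.im - y| ≤ r := by simpa using (Complex.abs_im_le_norm _).trans_eq hζ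
    have h_arg : |l * ζ.re| ≤ π / 2 := by
      rw [abs_mul]
      nlinarith [Real.pi_gt_three, abs_nonneg l]
    rw [norm_smul]
    calc ‖Real.cos (l * ζ.re)‖ * ‖b ζ.im‖ ≤ (1 - 2 / π ^ 2 * (l * ζ.re) ^ 2) * S :=
          mul_le_mul (abs_cos_le_one_sub_mul_sq h_arg) (hS _ h_im) (norm_nonneg _)
            ((abs_nonneg _).trans (abs_cos_le_one_sub_mul_sq h_arg))
      _ = S - (2 / π ^ 2 * l ^ 2 * S) * ζ.re ^ 2 := by ring
  refine (norm_circleAverage_le_circleAverage h_pointwise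
    (Continuous.continuousOn (by fun_prop)).circleIntegrable').trans_eq ?_
  have h_sq := Real.circleAverage_fun_smul (a := 2 / π ^ 2 * l ^ 2 * S)
    (f := fun ζ : ℂ ↦ ζ.re ^ 2) (c := y * Complex.I) (R := r)
  simp only [smul_eq_mul, circleAverage_re_sq] at h_sq
  have hlr_sq : l ^ 2 * r ^ 2 = 1 := by rw [← sq_abs l, ← mul_pow, hlr, one_pow]
  rw [Real.circleAverage_fun_sub (circleIntegrable_const _ _ _)
    (Continuous.continuousOn (by fun_prop)).circleIntegrable', Real.circleAverage_const, h_sq]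
  simp only [Complex.re_ofReal_mul, Complex.I_re, mul_zero]
  linear_combination -S / π ^ 2 * hlr_sq

lemma norm_sliceIntegral_modulate_le_mul_add {S m : ℝ} (hw : Continuous w) (hB : ∀ z, |w z| ≤ B)
    (hφ : Integrable φ) (hφ0 : ∀ x, 0 ≤ φ x) (hC0 : 0 ≤ C)
    (hC : ∀ s, |s| ≤ 1 → ∫ x, ‖φ (x + s) - φ x‖ ≤ C * |s|) (hlr : |l| * r = 1) (hr1 : r ≤ 1)
    (hsub : ∀ x : ℝ, w (x + y * Complex.I) ≤ circleAverage w (x + y * Complex.I) r)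
    (hm : sliceIntegral (fun ζ ↦ circleAverage w ζ r - w ζ) φ (y * Complex.I) ≤ m)
    (hS : ∀ t : ℝ, |t - y| ≤ r → ‖sliceIntegral w (modulate φ l) (t * Complex.I)‖ ≤ S) :
    ‖sliceIntegral w (modulate φ l) (y * Complex.I)‖ ≤ (1 - 1 / π ^ 2) * S + (B * (C * r) + m) := by
  have hr : 0 < r := pos_of_mul_pos_right (hlr ▸ one_pos) (abs_nonneg l)
  have hψ := integrable_modulate hφ l
  have h_split := sliceIntegral_sub (continuous_circleAverage_center hw r) hw
    (abs_circleAverage_le hB · r) hB hψ (y * Complex.I)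
  rw [sliceIntegral_circleAverage hw hB hψ] at h_split
  have h_mass := (norm_sliceIntegral_modulate_le (l := l)
    (fun x ↦ sub_nonneg.2 (hsub x)) hφ0).trans hm
  have h_eigen (s : ℝ) (hs : |s| ≤ |r|) :
      ∫ x, ‖symmShift (modulate φ l) s x - Real.cos (l * s) • modulate φ l x‖ ≤ C * r := by
    rw [abs_of_pos hr] at hs
    exact (integral_norm_symmShift_modulate_sub_le hφ hC l (hs.trans hr1)).trans (by gcongr)
  have h_shift := norm_circleAverage_sliceIntegral_sub_le (by fun_prop) hw hB hψ h_eigen y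
  have h_cos := norm_circleAverage_cos_smul_le hlr hS
  calc ‖sliceIntegral w (modulate φ l) (y * Complex.I)‖
      ≤ ‖circleAverage (sliceIntegral w (modulate φ l)) (y * Complex.I) r‖ + m := by
        rw [h_split] at h_mass
        linarith [norm_sub_norm_le (sliceIntegral w (modulate φ l) (y * Complex.I))
          (circleAverage (sliceIntegral w (modulate φ l)) (y * Complex.I) r),
          norm_sub_rev (sliceIntegral w (modulate φ l) (y * Complex.I))
          (circleAverage (sliceIntegral w (modulate φ l)) (y * Complex.I) r)]
    _ ≤ (1 - 1 / π ^ 2) * S + (B * (C * r) + m) := by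
        linarith [norm_le_norm_add_norm_sub' _ _ |>.trans (add_le_add h_cos h_shift)]

lemma norm_le_pow_mul_add_of_contraction {E : Type*} [Norm E] {b : ℝ → E} {q e S r ρ : ℝ}
    (hq1 : q < 1) (hr : 0 ≤ r) (he : 0 ≤ e) (hS : ∀ y, ‖b y‖ ≤ S)
    (h_step : ∀ y T, |y| + r < ρ → (∀ t, |t - y| ≤ r → ‖b t‖ ≤ T) → ‖b y‖ ≤ q * T + e)
    (n : ℕ) : ∀ y, |y| + n * r < ρ → ‖b y‖ ≤ q ^ n * S + e / (1 - q) := by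
  have hq : 0 < 1 - q := sub_pos.2 hq1
  induction n with
  | zero => exact fun y _ ↦ by linarith [hS y, div_nonneg he hq.le]
  | succ n ih =>
    intro y hy
    push_cast at hy
    refine (h_step y _ (by nlinarith [n.cast_nonneg (α := ℝ)]) fun t ht ↦ ih t ?_).trans_eq ?_
    · linarith [abs_sub_abs_le_abs_sub t y]
    · field_simp
      ring

lemma one_sub_pow_le_inv {a : ℝ} (ha0 : 0 < a) (ha1 : a ≤ 1) {n : ℕ} (hn : n ≠ 0) :
    (1 - a) ^ n ≤ (n * a)⁻¹ := by
  calc (1 - a) ^ n ≤ Real.exp (-a) ^ n := by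
        gcongr
        exact Real.one_sub_le_exp_neg a
    _ = (Real.exp (n * a))⁻¹ := by rw [← Real.exp_nat_mul, ← Real.exp_neg]; ring_nf
    _ ≤ (n * a)⁻¹ := by
        gcongr
        linarith [Real.add_one_le_exp (n * a)]

lemma norm_sliceIntegral_modulate_le_pow_mul_add {C₁ C₂ : ℝ} (hw : Continuous w)
    (hB : ∀ z, |w z| ≤ B) (hs : Subharmonic {z : ℂ | |z.im| < 3 / 4} w) (hφ : Integrable φ)
    (hφ0 : ∀ x, 0 ≤ φ x) (hC₁0 : 0 ≤ C₁) (hC₂0 : 0 ≤ C₂)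
    (hC₁ : ∀ s, |s| ≤ 1 → ∫ x, ‖φ (x + s) - φ x‖ ≤ C₁ * |s|)
    (hC₂ : ∀ s, |s| ≤ 1 → ∫ x, ‖symmShift φ s x - φ x‖ ≤ C₂ * s ^ 2)
    (hlr : |l| * r = 1) {n : ℕ} (hnr : n * r < 1 / 2) :
    ‖sliceIntegral w (modulate φ l) 0‖ ≤ (1 - 1 / π ^ 2) ^ n * (B * ∫ x, ‖φ x‖)
      + B * (C₁ + (2 * ((∫ x, ‖φ x‖) + 2 * C₂) / (1 / 4) + 5 * C₂)) * r / (1 / π ^ 2) := by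
  set I := ∫ x, ‖φ x‖
  set K := C₁ + (2 * (I + 2 * C₂) / (1 / 4) + 5 * C₂)
  have hr : 0 < r := pos_of_mul_pos_right (hlr ▸ one_pos) (abs_nonneg l)
  have hB0 : 0 ≤ B := (abs_nonneg _).trans (hB 0)
  have : 0 ≤ I := by positivity
  have h_step (y T : ℝ) (hy : |y| + r < 1 / 2)
      (hT : ∀ t : ℝ, |t - y| ≤ r → ‖sliceIntegral w (modulate φ l) (t * Complex.I)‖ ≤ T) :
      ‖sliceIntegral w (modulate φ l) (y * Complex.I)‖ ≤ (1 - 1 / π ^ 2) * T + B * K * r := by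
    have h_disk (x : ℝ) : closedBall (x + y * Complex.I) r ⊆ {z : ℂ | |z.im| < 3 / 4} := by
      rw [closedBall_subset_strip_iff hr.le, Complex.add_im, Complex.ofReal_im,
        Complex.im_ofReal_mul, Complex.I_im, mul_one, zero_add]
      linarith
    refine (norm_sliceIntegral_modulate_le_mul_add hw hB hφ hφ0 hC₁0 hC₁ hlr
      (by linarith [abs_nonneg y]) (fun x ↦ hs.le_circleAverage hr (h_disk x))
      (sliceIntegral_circleAverage_sub_le (δ := 1 / 4) hs (by norm_num) hw hB hφ hφ0 hC₂0 hC₂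
        (by norm_num) hr (by linarith)) hT).trans_eq (by ring)
  have h_bound (y : ℝ) : ‖sliceIntegral w (modulate φ l) (y * Complex.I)‖ ≤ B * I := by
    simpa only [norm_modulate] using norm_sliceIntegral_le hB (integrable_modulate hφ l) _
  have h_lt : 1 - 1 / π ^ 2 < 1 := sub_lt_self _ (by positivity)
  have h_iterate := norm_le_pow_mul_add_of_contraction h_lt hr.le (by positivity) h_bound h_step n
    0 (by simpa using hnr)
  simpa only [Complex.ofReal_zero, zero_mul, sub_sub_cancel] using h_iterate

lemma exists_norm_sliceIntegral_modulate_le_div (hφ : ContDiff ℝ 2 φ) (hc : HasCompactSupport φ)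
    (hφ0 : ∀ x, 0 ≤ φ x) :
    ∃ D, 0 ≤ D ∧ ∀ (w : ℂ → ℝ) (B : ℝ), Continuous w → (∀ z, |w z| ≤ B) →
      Subharmonic {z : ℂ | |z.im| < 3 / 4} w → ∀ n : ℕ, n ≠ 0 → ∀ l : ℝ, |l| = 2 * π * n →
        ‖sliceIntegral w (modulate φ l) 0‖ ≤ D * B / n := by
  have hφi : Integrable φ := hφ.continuous.integrable_of_hasCompactSupport hc
  obtain ⟨C₁, hC₁0, hC₁⟩ := exists_integral_norm_shift_sub_le (hφ.of_le one_le_two) hc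
  obtain ⟨C₂, hC₂0, hC₂⟩ := exists_integral_norm_symmShift_sub_le hφ hc
  set I := ∫ x, ‖φ x‖
  have : 0 ≤ I := by positivity
  set K := C₁ + (2 * (I + 2 * C₂) / (1 / 4) + 5 * C₂)
  refine ⟨π ^ 2 * I + π / 2 * K, by positivity, fun w B hw hB hs n hn l hl ↦ ?_⟩
  have hB0 : 0 ≤ B := (abs_nonneg _).trans (hB 0)
  have h_lr : |l| * (2 * π * n)⁻¹ = 1 := by rw [hl]; field_simp
  have h_nr : n * (2 * π * n)⁻¹ < 1 / 2 := by
    have h_cancel : n * (2 * π * n)⁻¹ = (2 * π)⁻¹ := by field_simp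
    rw [h_cancel, one_div]
    exact inv_strictAnti₀ two_pos (by linarith [Real.pi_gt_three])
  have h_pow : (1 - 1 / π ^ 2) ^ n ≤ (n * (1 / π ^ 2))⁻¹ := by
    refine one_sub_pow_le_inv (by positivity) ?_ hn
    rw [div_le_one (by positivity)]
    exact one_le_pow₀ (by linarith [Real.pi_gt_three])
  calc ‖sliceIntegral w (modulate φ l) 0‖
      ≤ (1 - 1 / π ^ 2) ^ n * (B * I) + B * K * (2 * π * n)⁻¹ / (1 / π ^ 2) :=
        norm_sliceIntegral_modulate_le_pow_mul_add hw hB hs hφi hφ0 hC₁0 hC₂0 hC₁ hC₂ h_lr h_nr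
    _ ≤ (n * (1 / π ^ 2))⁻¹ * (B * I) + B * K * (2 * π * n)⁻¹ / (1 / π ^ 2) := by gcongr
    _ = (π ^ 2 * I + π / 2 * K) * B / n := by field_simp

end Modulation

section FourierDecay

/-- A smooth compactly supported weight whose integer translates sum to one. Integrating against
it replaces integration over a period, which lets periodic functions be treated on the line. -/
noncomputable def partitionWeight (x : ℝ) : ℝ :=
  Real.smoothTransition (1 + x) * Real.smoothTransition (1 - x)

lemma partitionWeight_nonneg (x : ℝ) : 0 ≤ partitionWeight x :=
  mul_nonneg (Real.smoothTransition.nonneg _) (Real.smoothTransition.nonneg _)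

lemma contDiff_partitionWeight {n : ℕ∞} : ContDiff ℝ n partitionWeight :=
  (Real.smoothTransition.contDiff.comp (by fun_prop)).mul
    (Real.smoothTransition.contDiff.comp (by fun_prop))

lemma partitionWeight_eq_zero {x : ℝ} (hx : x ∉ Ioc (-1 : ℝ) 1) : partitionWeight x = 0 := by
  rcases le_or_gt x (-1) with h | h
  · rw [partitionWeight, Real.smoothTransition.zero_of_nonpos (by linarith), zero_mul]
  · have h1 : 1 < x := not_le.1 fun h1 ↦ hx ⟨h, h1⟩
    rw [partitionWeight, Real.smoothTransition.zero_of_nonpos (x := 1 - x) (by linarith), mul_zero]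

lemma hasCompactSupport_partitionWeight : HasCompactSupport partitionWeight :=
  HasCompactSupport.intro isCompact_Icc fun _ hx ↦
    partitionWeight_eq_zero fun h ↦ hx (Ioc_subset_Icc_self h)

lemma partitionWeight_sub_one_add {x : ℝ} (hx : x ∈ Icc (0 : ℝ) 1) :
    partitionWeight (x - 1) + partitionWeight x = 1 := by
  have h_left : Real.smoothTransition (1 + x) = 1 :=
    Real.smoothTransition.one_of_one_le (by linarith [hx.1])
  have h_right : Real.smoothTransition (1 - (x - 1)) = 1 :=
    Real.smoothTransition.one_of_one_le (by linarith [hx.2])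
  rw [partitionWeight, partitionWeight, h_left, h_right, mul_one, one_mul, add_sub_cancel,
    Real.smoothTransition, Real.smoothTransition, sub_sub_cancel, add_comm (expNegInvGlue (1 - x)),
    ← add_div]
  exact div_self (Real.smoothTransition.pos_denom x).ne'

lemma integral_partitionWeight_smul {E : Type*} [NormedAddCommGroup E] [NormedSpace ℝ E]
    {f : ℝ → E} (hf : Continuous f) (hper : Function.Periodic f 1) :
    ∫ x, partitionWeight x • f x = ∫ x in (0 : ℝ)..1, f x := by
  have h_cont : Continuous partitionWeight := (contDiff_partitionWeight (n := 0)).continuous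
  have h_int (g : ℝ → ℝ) (hg : Continuous g) (a b : ℝ) :
      IntervalIntegrable (fun x ↦ g x • f x) volume a b := (hg.smul hf).intervalIntegrable a b
  have h_support : ∫ x, partitionWeight x • f x = ∫ x in (-1 : ℝ)..1, partitionWeight x • f x := by
    rw [intervalIntegral.integral_of_le (by norm_num),
      setIntegral_eq_integral_of_forall_compl_eq_zero]
    exact fun x hx ↦ by rw [partitionWeight_eq_zero hx, zero_smul]
  have h_shift : ∫ x in (-1 : ℝ)..0, partitionWeight x • f x
      = ∫ x in (0 : ℝ)..1, partitionWeight (x - 1) • f x := by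
    have := intervalIntegral.integral_comp_sub_right (a := 0) (b := 1)
      (fun x ↦ partitionWeight x • f x) 1
    simp only [hper.sub_eq, zero_sub, sub_self] at this
    exact this.symm
  rw [h_support, ← intervalIntegral.integral_add_adjacent_intervals (b := 0)
    (h_int _ h_cont _ _) (h_int _ h_cont _ _), h_shift, ← intervalIntegral.integral_add
    (h_int (fun x ↦ partitionWeight (x - 1)) (by fun_prop) _ _) (h_int _ h_cont _ _)]
  refine intervalIntegral.integral_congr fun x hx ↦ ?_
  rw [uIcc_of_le zero_le_one] at hx
  simp only [← add_smul, partitionWeight_sub_one_add hx, one_smul]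

lemma sliceIntegral_modulate_partitionWeight {w : ℂ → ℝ} {f : C(UnitAddCircle, ℂ)}
    (hf : ∀ x : ℝ, f x = w x) (k : ℤ) :
    sliceIntegral w (modulate partitionWeight (-(2 * π * k))) 0 = fourierCoeff f k := by
  let g (x : ℝ) : ℂ := fourier (-k) (x : UnitAddCircle) * f x
  have hg : Continuous g := by fun_prop
  have hg_per : Function.Periodic g 1 := fun x ↦ by simp only [g, AddCircle.coe_add_period]
  rw [fourierCoeff_eq_intervalIntegral f k 0, zero_add, one_div_one, one_smul]
  refine Eq.trans ?_ (integral_partitionWeight_smul hg hg_per)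
  refine integral_congr_ae (Filter.Eventually.of_forall fun x ↦ ?_)
  simp only [modulate, fourier_coe_apply, hf, add_zero, Complex.real_smul]
  push_cast
  ring_nf

theorem exists_norm_fourierCoeff_le_of_subharmonic :
    ∃ D : ℝ, 0 ≤ D ∧ ∀ (w : ℂ → ℝ) (B : ℝ) (f : C(UnitAddCircle, ℂ)),
      Subharmonic {z : ℂ | |z.im| < 1} w → (∀ z : ℂ, |z.im| < 1 → |w z| ≤ B) →
      (∀ x : ℝ, f x = w x) → ∀ k : ℤ, k ≠ 0 → ‖fourierCoeff f k‖ ≤ D * B / |(k : ℝ)| := by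
  obtain ⟨D, hD0, hD⟩ := exists_norm_sliceIntegral_modulate_le_div contDiff_partitionWeight
    hasCompactSupport_partitionWeight partitionWeight_nonneg
  refine ⟨D, hD0, fun w B f hw hB hf k hk ↦ ?_⟩
  obtain ⟨v, hv, hvB, hvs, hvw⟩ :=
    hw.exists_continuous_extension (h := 3 / 4) (by norm_num) (by norm_num) hB
  have hfv (x : ℝ) : f x = v x := by rw [hf, hvw x (by norm_num)]
  rw [← sliceIntegral_modulate_partitionWeight hfv, ← Int.cast_abs, ← Nat.cast_natAbs]
  refine hD v B hv hvB hvs k.natAbs (by simpa using hk) _ ?_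
  rw [abs_neg, abs_mul, abs_of_pos Real.two_pi_pos, Nat.cast_natAbs, Int.cast_abs]

end FourierDecay

section FejerKernel

/-- The normalized Fejér kernel of order `M`. It is the Fourier multiplier of the averaging operator
`fejerAverage`. -/
noncomputable def fejerKernel (M : ℕ) (θ : UnitAddCircle) : ℝ :=
  ‖(M : ℂ)⁻¹ * ∑ j ∈ Finset.range M, (θ.toCircle : ℂ) ^ j‖ ^ 2

/-- The Fejér-weighted average of `f` along the orbit of `x` under rotation by `ω`. -/
noncomputable def fejerAverage (M : ℕ) (ω : UnitAddCircle) (f : UnitAddCircle → ℂ)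
    (x : UnitAddCircle) : ℂ :=
  ∑ m ∈ Finset.Icc (-(M : ℤ) + 1) (M - 1), (((M - |(m : ℝ)|) / M ^ 2 : ℝ) : ℂ) * f (x + m • ω)

lemma four_mul_norm_le_norm_toCircle_sub_one (θ : UnitAddCircle) :
    4 * ‖θ‖ ≤ ‖(θ.toCircle : ℂ) - 1‖ := by
  induction θ using QuotientAddGroup.induction_on with | H x
  set y := x - round x with hy
  have h_coe : (x : UnitAddCircle) = y := by
    have h_round : ((round x : ℝ) : UnitAddCircle) = 0 :=
      (AddCircle.coe_eq_zero_iff 1).2 ⟨round x, by simp⟩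
    rw [hy, AddCircle.coe_sub, h_round, sub_zero]
  have h_arg : |π * y| ≤ π / 2 := by
    rw [abs_mul, abs_of_pos Real.pi_pos]
    nlinarith [Real.pi_pos, abs_sub_round x]
  have h_exp : (AddCircle.toCircle (y : UnitAddCircle) : ℂ)
      = Complex.exp (Complex.I * ((2 * π * y : ℝ) : ℂ)) := by
    rw [AddCircle.toCircle_apply_mk, div_one, Circle.coe_exp, mul_comm]
  rw [UnitAddCircle.norm_eq, h_coe, h_exp, Complex.norm_exp_I_mul_ofReal_sub_one, norm_mul,
    Real.norm_eq_abs, Real.norm_eq_abs, abs_of_pos (two_pos : (0 : ℝ) < 2), ← hy]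
  calc 4 * |y| = 2 * (2 / π * |π * y|) := by
        rw [abs_mul, abs_of_pos Real.pi_pos]; field_simp; ring
    _ ≤ 2 * |Real.sin (π * y)| := by gcongr; exact Real.mul_abs_le_abs_sin h_arg
    _ = 2 * |Real.sin (2 * π * y / 2)| := by ring_nf

lemma card_filter_sub_eq (M : ℕ) (m : ℤ) :
    {p ∈ Finset.range M ×ˢ Finset.range M | (p.1 : ℤ) - p.2 = m}.card = M - m.natAbs := by
  rw [← Finset.card_range (M - m.natAbs)]
  refine Finset.card_nbij' (fun p ↦ min p.1 p.2) (fun i ↦ (i + m.toNat, i + (-m).toNat))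
    ?_ ?_ ?_ ?_ <;> intro p hp <;>
    simp only [Finset.coe_filter, Finset.mem_product, Finset.mem_range, Finset.coe_range,
      mem_ofPred_eq, mem_Iio, Prod.ext_iff] at hp ⊢ <;> omega

lemma sum_range_sum_range_sub {E : Type*} [AddCommMonoid E] (g : ℤ → E) (M : ℕ) :
    ∑ j ∈ Finset.range M, ∑ l ∈ Finset.range M, g (j - l)
      = ∑ m ∈ Finset.Icc (-(M : ℤ) + 1) (M - 1), (M - m.natAbs) • g m := by
  have h_maps : ∀ p ∈ Finset.range M ×ˢ Finset.range M,
      (p.1 : ℤ) - p.2 ∈ Finset.Icc (-(M : ℤ) + 1) (M - 1) := fun p hp ↦ by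
    simp only [Finset.mem_product, Finset.mem_range, Finset.mem_Icc] at hp ⊢
    omega
  rw [← Finset.sum_product' (f := fun j l : ℕ ↦ g (j - l)),
    ← Finset.sum_fiberwise_of_maps_to h_maps]
  refine Finset.sum_congr rfl fun m _ ↦ ?_
  rw [← card_filter_sub_eq, ← Finset.sum_const]
  exact Finset.sum_congr rfl fun p hp ↦ by rw [(Finset.mem_filter.1 hp).2]

lemma fejerKernel_eq_sum (M : ℕ) (θ : UnitAddCircle) :
    (fejerKernel M θ : ℂ) = ∑ m ∈ Finset.Icc (-(M : ℤ) + 1) (M - 1),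
      (((M - |(m : ℝ)|) / M ^ 2 : ℝ) : ℂ) * fourier m θ := by
  have h_sq : (fejerKernel M θ : ℂ) = (M ^ 2 : ℂ)⁻¹ *
      ∑ j ∈ Finset.range M, ∑ l ∈ Finset.range M, fourier (j - l : ℤ) θ := by
    have h_term (j l : ℕ) : fourier (j - l : ℤ) θ
        = (θ.toCircle : ℂ) ^ j * conj ((θ.toCircle : ℂ) ^ l) := by
      rw [sub_eq_add_neg, fourier_add, fourier_neg, fourier_apply, fourier_apply,
        AddCircle.toCircle_zsmul, AddCircle.toCircle_zsmul]
      simp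
    simp_rw [h_term]
    rw [← Finset.sum_mul_sum, ← map_sum, fejerKernel, Complex.ofReal_pow, ← Complex.mul_conj',
      map_mul, map_inv₀, Complex.conj_natCast]
    ring
  rw [h_sq, sum_range_sum_range_sub (fun m ↦ fourier m θ), Finset.mul_sum]
  refine Finset.sum_congr rfl fun m hm ↦ ?_
  have h_le : m.natAbs ≤ M := by rw [Finset.mem_Icc] at hm; omega
  rw [nsmul_eq_mul, Nat.cast_sub h_le, ← Int.cast_abs, ← Nat.cast_natAbs]
  push_cast
  ring

lemma fejerKernel_nonneg (M : ℕ) (θ : UnitAddCircle) : 0 ≤ fejerKernel M θ := sq_nonneg _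

lemma fejerKernel_le_one (M : ℕ) (θ : UnitAddCircle) : fejerKernel M θ ≤ 1 := by
  refine pow_le_one₀ (norm_nonneg _) ?_
  rw [norm_mul, norm_inv, Complex.norm_natCast]
  refine inv_mul_le_one_of_le₀ ((norm_sum_le _ _).trans ?_) M.cast_nonneg
  simp only [norm_pow, Circle.norm_coe, one_pow, Finset.sum_const, Finset.card_range, nsmul_one,
    le_refl]

lemma fejerKernel_zero {M : ℕ} (hM : M ≠ 0) : fejerKernel M 0 = 1 := by
  simp [fejerKernel, hM]

lemma fejerKernel_neg (M : ℕ) (θ : UnitAddCircle) : fejerKernel M (-θ) = fejerKernel M θ := by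
  have h_conj : (M : ℂ)⁻¹ * ∑ j ∈ Finset.range M, ((-θ).toCircle : ℂ) ^ j
      = conj ((M : ℂ)⁻¹ * ∑ j ∈ Finset.range M, (θ.toCircle : ℂ) ^ j) := by
    simp only [AddCircle.toCircle_neg, Circle.coe_inv_eq_conj, map_mul, map_inv₀, map_natCast,
      map_sum, map_pow]
  rw [fejerKernel, h_conj, RCLike.norm_conj, fejerKernel]

lemma fejerKernel_le_of_le_norm (M : ℕ) {θ : UnitAddCircle} {d : ℝ} (hd : 0 < d) (hθ : d ≤ ‖θ‖) :
    fejerKernel M θ ≤ 1 / (4 * M ^ 2 * d ^ 2) := by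
  have h_dist : 4 * d ≤ ‖(θ.toCircle : ℂ) - 1‖ :=
    le_trans (by gcongr) (four_mul_norm_le_norm_toCircle_sub_one θ)
  have h_ne : (θ.toCircle : ℂ) ≠ 1 := fun h ↦ by rw [h, sub_self, norm_zero] at h_dist; linarith
  have h_geom : ‖∑ j ∈ Finset.range M, (θ.toCircle : ℂ) ^ j‖ ≤ 2 / (4 * d) := by
    rw [geom_sum_eq h_ne, norm_div]
    gcongr
    refine (norm_sub_le _ _).trans_eq ?_
    rw [norm_pow, Circle.norm_coe, one_pow, norm_one, one_add_one_eq_two]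
  calc fejerKernel M θ = ((M : ℝ)⁻¹ * ‖∑ j ∈ Finset.range M, (θ.toCircle : ℂ) ^ j‖) ^ 2 := by
        rw [fejerKernel, norm_mul, norm_inv, Complex.norm_natCast]
    _ ≤ ((M : ℝ)⁻¹ * (2 / (4 * d))) ^ 2 := by gcongr
    _ = 1 / (4 * M ^ 2 * d ^ 2) := by field_simp; norm_num

lemma continuous_fejerAverage {f : UnitAddCircle → ℂ} (hf : Continuous f) (M : ℕ)
    (ω : UnitAddCircle) : Continuous (fejerAverage M ω f) := by
  unfold fejerAverage
  fun_prop

lemma integrable_haarAddCircle {T : ℝ} [Fact (0 < T)] {E : Type*} [NormedAddCommGroup E]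
    {f : AddCircle T → E} (hf : Continuous f) : Integrable f AddCircle.haarAddCircle :=
  hf.integrable_of_hasCompactSupport (HasCompactSupport.of_compactSpace f)

lemma fourierCoeff_comp_add_right (f : UnitAddCircle → ℂ) (a : UnitAddCircle) (k : ℤ) :
    fourierCoeff (fun x ↦ f (x + a)) k = fourier k a * fourierCoeff f k := by
  have h_fourier (x : UnitAddCircle) : fourier (-k) x = fourier k a * fourier (-k) (x + a) := by
    simp_rw [fourier_apply, smul_add, AddCircle.toCircle_add, neg_smul, AddCircle.toCircle_neg]
    push_cast
    field_simp
  simp only [fourierCoeff, smul_eq_mul]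
  rw [← integral_const_mul,
    ← integral_add_right_eq_self (fun x ↦ fourier k a * (fourier (-k) x * f x)) a]
  exact integral_congr_ae (Filter.Eventually.of_forall fun x ↦ by
    simp only [h_fourier x, mul_assoc])

lemma fourierCoeff_fejerAverage {f : UnitAddCircle → ℂ} (hf : Continuous f) (M : ℕ)
    (ω : UnitAddCircle) (k : ℤ) :
    fourierCoeff (fejerAverage M ω f) k = fejerKernel M (k • ω) * fourierCoeff f k := by
  have h_int (m : ℤ) : Integrable (fun x ↦ (((M - |(m : ℝ)|) / M ^ 2 : ℝ) : ℂ) * f (x + m • ω))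
      AddCircle.haarAddCircle :=
    integrable_haarAddCircle (by fun_prop)
  have h_sum : fejerAverage M ω f = ∑ m ∈ Finset.Icc (-(M : ℤ) + 1) (M - 1),
      fun x ↦ (((M - |(m : ℝ)|) / M ^ 2 : ℝ) : ℂ) * f (x + m • ω) := by
    ext x
    rw [Finset.sum_apply, fejerAverage]
  rw [h_sum, fourierCoeff.sum _ _ fun m _ ↦ h_int m, Finset.sum_apply, fejerKernel_eq_sum,
    Finset.sum_mul]
  refine Finset.sum_congr rfl fun m _ ↦ ?_
  rw [fourierCoeff.const_mul, fourierCoeff_comp_add_right, fourier_apply, fourier_apply,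
    smul_comm k m, mul_assoc]

end FejerKernel

section SmallDivisors

lemma sum_Icc_neg_eq_add_sum {E : Type*} [AddCommGroup E] (g : ℤ → E) (N : ℕ) :
    ∑ k ∈ Finset.Icc (-(N : ℤ)) N, g k = g 0 + ∑ n ∈ Finset.Icc 1 N, (g n + g (-n)) := by
  induction N with
  | zero => simp
  | succ N ih =>
    rw [Finset.sum_Icc_succ_top (Nat.le_add_left 1 N), ← add_assoc, ← ih, Nat.cast_succ,
      Finset.sum_Icc_succ_eq_add_endpoints, add_comm]

lemma mul_sum_le_sum_Icc_of_separated {g : ℕ → ℝ} (hg : AntitoneOn g (Ici 1))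
    (hg0 : ∀ n, 0 ≤ g n) {L K : ℕ} {S : Finset ℕ} (hS : ∀ n ∈ S, L < n ∧ n ≤ K)
    (hsep : ∀ m ∈ S, ∀ n ∈ S, m < n → m + L ≤ n) :
    L * ∑ n ∈ S, g n ≤ ∑ n ∈ Finset.Icc 1 K, g n := by
  have h_disjoint : (S : Set ℕ).PairwiseDisjoint fun n ↦ Finset.Ioc (n - L) n := by
    refine fun m hm n hn hmn ↦ Finset.disjoint_left.2 fun j hjm hjn ↦ ?_
    rw [Finset.mem_Ioc] at hjm hjn
    rcases hmn.lt_or_gt with h | h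
    · have := hsep m hm n hn h
      omega
    · have := hsep n hn m hm h
      omega
  have h_window (n : ℕ) (hn : n ∈ S) : L * g n ≤ ∑ j ∈ Finset.Ioc (n - L) n, g j := by
    have h_card : (Finset.Ioc (n - L) n).card = L := by
      rw [Nat.card_Ioc, Nat.sub_sub_self (hS n hn).1.le]
    rw [← nsmul_eq_mul]
    refine Eq.trans_le (by rw [h_card]) (Finset.card_nsmul_le_sum _ g _ fun j hj ↦ ?_)
    rw [Finset.mem_Ioc] at hj
    have hj1 : 1 ≤ j := by omega
    exact hg hj1 (hj1.trans hj.2) hj.2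
  rw [Finset.mul_sum]
  refine (Finset.sum_le_sum h_window).trans ?_
  rw [← Finset.sum_biUnion h_disjoint]
  refine Finset.sum_le_sum_of_subset_of_nonneg (fun j hj ↦ ?_) fun j _ _ ↦ hg0 j
  obtain ⟨n, hn, hj⟩ := Finset.mem_biUnion.1 hj
  rw [Finset.mem_Ioc] at hj
  exact Finset.mem_Icc.2 ⟨by omega, hj.2.trans (hS n hn).2⟩

lemma sum_Icc_inv_le_one_add_log (K : ℕ) :
    ∑ n ∈ Finset.Icc 1 K, (n : ℝ)⁻¹ ≤ 1 + Real.log K := by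
  have h := harmonic_le_one_add_log K
  rw [harmonic_eq_sum_Icc] at h
  simpa only [Rat.cast_sum, Rat.cast_inv, Rat.cast_natCast] using h

variable {ω : UnitAddCircle} {d : ℝ} {L : ℕ}

/-- Two near-returns `‖m • ω‖, ‖n • ω‖ < d` give a near-return at time `n - m`, hence they are more
than `L` apart. -/
lemma sum_inv_near_returns_le (hL : L ≠ 0) (hω : ∀ n : ℕ, n ≠ 0 → n ≤ L → 2 * d ≤ ‖n • ω‖)
    (hd : 0 < d) (K : ℕ) :
    ∑ n ∈ Finset.Icc 1 K with ‖n • ω‖ < d, (n : ℝ)⁻¹ ≤ 1 / L * (1 + Real.log K) := by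
  have h_large (n : ℕ) (hn : n ≠ 0) (hnd : ‖n • ω‖ < 2 * d) : L < n :=
    not_le.1 fun h ↦ (hω n hn h).not_gt hnd
  have h_separated := mul_sum_le_sum_Icc_of_separated (g := fun n ↦ (n : ℝ)⁻¹) (L := L) (K := K)
    (S := {n ∈ Finset.Icc 1 K | ‖n • ω‖ < d})
    (fun m hm n _ hmn ↦ inv_anti₀ (Nat.cast_pos.2 hm) (Nat.cast_le.2 hmn))
    (fun n ↦ by positivity) (fun n hn ↦ ?_) fun m hm n hn hmn ↦ ?_
  · rw [one_div, inv_mul_eq_div, le_div_iff₀' (by positivity)]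
    exact h_separated.trans (sum_Icc_inv_le_one_add_log K)
  · rw [Finset.mem_filter, Finset.mem_Icc] at hn
    exact ⟨h_large n (by omega) (by linarith), hn.1.2⟩
  · rw [Finset.mem_filter] at hm hn
    have h_diff : ‖(n - m) • ω‖ < 2 * d := by
      rw [sub_nsmul _ hmn.le, ← sub_eq_add_neg]
      linarith [norm_sub_le (n • ω) (m • ω), hm.2, hn.2]
    have := h_large (n - m) (by omega) h_diff
    omega

lemma sum_fejerKernel_div_le (hL : L ≠ 0) (hω : ∀ n : ℕ, n ≠ 0 → n ≤ L → 2 * d ≤ ‖n • ω‖)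
    (hd : 0 < d) (M K : ℕ) :
    ∑ n ∈ Finset.Icc 1 K, fejerKernel M (n • ω) / n
      ≤ (1 / (4 * M ^ 2 * d ^ 2) + 1 / L) * (1 + Real.log K) := by
  set ε := 1 / (4 * M ^ 2 * d ^ 2)
  have h_pointwise (n : ℕ) : fejerKernel M (n • ω) / n
      ≤ ε * (n : ℝ)⁻¹ + if ‖n • ω‖ < d then (n : ℝ)⁻¹ else 0 := by
    have : 0 ≤ ε * (n : ℝ)⁻¹ := by positivity
    rw [div_eq_mul_inv]
    split_ifs with h
    · nlinarith [fejerKernel_le_one M (n • ω), inv_nonneg.2 (n.cast_nonneg (α := ℝ))]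
    · rw [add_zero]
      gcongr
      exact fejerKernel_le_of_le_norm M hd (not_lt.1 h)
  calc ∑ n ∈ Finset.Icc 1 K, fejerKernel M (n • ω) / n
      ≤ ∑ n ∈ Finset.Icc 1 K, (ε * (n : ℝ)⁻¹ + if ‖n • ω‖ < d then (n : ℝ)⁻¹ else 0) :=
        Finset.sum_le_sum fun n _ ↦ h_pointwise n
    _ = ε * ∑ n ∈ Finset.Icc 1 K, (n : ℝ)⁻¹
        + ∑ n ∈ Finset.Icc 1 K with ‖n • ω‖ < d, (n : ℝ)⁻¹ := by
        rw [Finset.sum_add_distrib, ← Finset.mul_sum, Finset.sum_filter]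
    _ ≤ ε * (1 + Real.log K) + 1 / L * (1 + Real.log K) := by
        gcongr
        exacts [sum_Icc_inv_le_one_add_log K, sum_inv_near_returns_le hL hω hd K]
    _ = (ε + 1 / L) * (1 + Real.log K) := by ring

end SmallDivisors

section FourierTail

lemma sum_le_sum_Ioc_add_neg {F : ℤ → ℝ} {K : ℕ} (hF_nonneg : ∀ k, 0 ≤ F k)
    (hF_zero : ∀ k : ℤ, |k| ≤ K → F k = 0) {s : Finset ℤ} {N : ℕ}
    (hs : ∀ k ∈ s, k.natAbs ≤ N) : ∑ k ∈ s, F k ≤ ∑ n ∈ Finset.Ioc K N, (F n + F (-n)) := by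
  have h_subset : s ⊆ Finset.Icc (-(N : ℤ)) N := fun k hk ↦ by
    have := hs k hk
    rw [Finset.mem_Icc]
    omega
  have h_Ioc : ∑ n ∈ Finset.Ioc K N, (F n + F (-n)) = ∑ n ∈ Finset.Icc 1 N, (F n + F (-n)) := by
    refine Finset.sum_subset (fun n hn ↦ ?_) fun n hn hnK ↦ ?_
    · rw [Finset.mem_Ioc] at hn
      exact Finset.mem_Icc.2 ⟨by omega, hn.2⟩
    · have hn_le : |(n : ℤ)| ≤ K := by
        rw [Finset.mem_Icc] at hn
        rw [Finset.mem_Ioc] at hnK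
        rw [Nat.abs_cast, Nat.cast_le]
        omega
      rw [hF_zero n hn_le, hF_zero (-n) (by rwa [abs_neg]), add_zero]
  calc ∑ k ∈ s, F k ≤ ∑ k ∈ Finset.Icc (-(N : ℤ)) N, F k :=
        Finset.sum_le_sum_of_subset_of_nonneg h_subset fun k _ _ ↦ hF_nonneg k
    _ = ∑ n ∈ Finset.Ioc K N, (F n + F (-n)) := by
        rw [sum_Icc_neg_eq_add_sum, hF_zero 0 (by simp), zero_add, h_Ioc]

lemma sum_le_of_le_div_sq {F : ℤ → ℝ} {C : ℝ} {K : ℕ} (hK : K ≠ 0) (hC : 0 ≤ C)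
    (hF_nonneg : ∀ k, 0 ≤ F k) (hF_zero : ∀ k : ℤ, |k| ≤ K → F k = 0)
    (hF_le : ∀ k : ℤ, (K : ℤ) < |k| → F k ≤ C / k ^ 2) (s : Finset ℤ) :
    ∑ k ∈ s, F k ≤ 2 * C / K := by
  set N := max K (s.sup Int.natAbs)
  have h_pair (n : ℕ) (hn : n ∈ Finset.Ioc K N) : F n + F (-n) ≤ 2 * C * ((n : ℝ) ^ 2)⁻¹ := by
    have hKn : (K : ℤ) < |(n : ℤ)| := by
      rw [Nat.abs_cast, Nat.cast_lt]
      exact (Finset.mem_Ioc.1 hn).1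
    have h_pos := hF_le n hKn
    have h_neg := hF_le (-n) (by rwa [abs_neg])
    push_cast at h_pos h_neg
    rw [neg_sq] at h_neg
    linarith [div_eq_mul_inv C ((n : ℝ) ^ 2)]
  calc ∑ k ∈ s, F k ≤ ∑ n ∈ Finset.Ioc K N, (F n + F (-n)) :=
        sum_le_sum_Ioc_add_neg hF_nonneg hF_zero fun k hk ↦
          (Finset.le_sup hk).trans (le_max_right _ _)
    _ ≤ 2 * C * ∑ n ∈ Finset.Ioc K N, ((n : ℝ) ^ 2)⁻¹ := by
        rw [Finset.mul_sum]
        exact Finset.sum_le_sum h_pair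
    _ ≤ 2 * C * (K : ℝ)⁻¹ := by
        gcongr
        refine (sum_Ioc_inv_sq_le_sub hK (le_max_left _ _)).trans (sub_le_self _ ?_)
        positivity
    _ = 2 * C / K := by rw [div_eq_mul_inv]

variable {T : ℝ} [Fact (0 < T)]

lemma integral_norm_sq_le_of_fourierCoeff (g : C(AddCircle T, ℂ)) {D : ℝ} {K : ℕ} (hK : K ≠ 0)
    (hg_zero : ∀ k : ℤ, |k| ≤ K → fourierCoeff g k = 0)
    (hg_le : ∀ k : ℤ, (K : ℤ) < |k| → ‖fourierCoeff g k‖ ≤ D / |(k : ℝ)|) :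
    ∫ x, ‖g x‖ ^ 2 ∂AddCircle.haarAddCircle ≤ 2 * D ^ 2 / K := by
  have h_parseval := hasSum_sq_fourierCoeff
    (ContinuousMap.toLp (E := ℂ) 2 AddCircle.haarAddCircle ℂ g)
  have h_ae : ∫ x, ‖ContinuousMap.toLp (E := ℂ) 2 AddCircle.haarAddCircle ℂ g x‖ ^ 2
      ∂AddCircle.haarAddCircle = ∫ x, ‖g x‖ ^ 2 ∂AddCircle.haarAddCircle := by
    refine integral_congr_ae ?_
    filter_upwards [ContinuousMap.coeFn_toLp (p := 2) (𝕜 := ℂ) AddCircle.haarAddCircle g] with x hx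
    rw [hx]
  simp_rw [fourierCoeff_toLp] at h_parseval
  rw [h_ae] at h_parseval
  refine hasSum_le_of_sum_le h_parseval (sum_le_of_le_div_sq hK (sq_nonneg D)
    (fun k ↦ sq_nonneg _) (fun k hk ↦ ?_) fun k hk ↦ ?_)
  · rw [hg_zero k hk, norm_zero, zero_pow two_ne_zero]
  · rw [← sq_abs (k : ℝ), ← div_pow]
    gcongr
    exact hg_le k hk

lemma fourierCoeff_sub_partialSum (f : C(AddCircle T, ℂ)) (s : Finset ℤ) (k : ℤ) :
    fourierCoeff (f - ∑ j ∈ s, fourierCoeff f j • fourier j : C(AddCircle T, ℂ)) k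
      = if k ∈ s then 0 else fourierCoeff f k := by
  have h_eq : (f - ∑ j ∈ s, fourierCoeff f j • fourier j : C(AddCircle T, ℂ))
      = f + ∑ j ∈ s, (-fourierCoeff f j) • fourier j := by
    simp only [neg_smul, Finset.sum_neg_distrib, sub_eq_add_neg]
  rw [h_eq, ContinuousMap.coe_add, fourierCoeff.add (integrable_haarAddCircle f.continuous)
    (integrable_haarAddCircle (ContinuousMap.continuous _)), ContinuousMap.coe_sum,
    fourierCoeff.sum _ _ fun j _ ↦ integrable_haarAddCircle (ContinuousMap.continuous _)]
  simp only [Pi.add_apply, Finset.sum_apply, ContinuousMap.coe_smul, fourierCoeff.const_smul,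
    fourierCoeff_fourier, Pi.single_apply, smul_eq_mul, mul_ite, mul_one, mul_zero,
    Finset.sum_ite_eq]
  split_ifs <;> simp

lemma haarAddCircle_real_lt_norm_le (h : C(AddCircle T, ℂ)) {D η : ℝ} {K : ℕ} (hK : K ≠ 0)
    (hη : 0 < η) (h_coeff : ∀ k : ℤ, k ≠ 0 → ‖fourierCoeff h k‖ ≤ D / |(k : ℝ)|)
    (h_low : ∑ k ∈ Finset.Icc (-(K : ℤ)) K, ‖fourierCoeff h k‖ ≤ η) :
    AddCircle.haarAddCircle.real {x | 2 * η < ‖h x‖} ≤ 2 * D ^ 2 / (K * η ^ 2) := by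
  set low : C(AddCircle T, ℂ) := ∑ k ∈ Finset.Icc (-(K : ℤ)) K, fourierCoeff h k • fourier k
  have h_norm_low (x : AddCircle T) : ‖low x‖ ≤ η := by
    refine le_trans ?_ h_low
    rw [ContinuousMap.sum_apply]
    refine (norm_sum_le _ _).trans_eq (Finset.sum_congr rfl fun k _ ↦ ?_)
    rw [ContinuousMap.smul_apply, norm_smul, fourier_apply, Circle.norm_coe, mul_one]
  have h_tail (k : ℤ) : fourierCoeff (h - low) k
      = if k ∈ Finset.Icc (-(K : ℤ)) K then 0 else fourierCoeff h k :=
    fourierCoeff_sub_partialSum h _ k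
  have h_sq : ∫ x, ‖(h - low) x‖ ^ 2 ∂AddCircle.haarAddCircle ≤ 2 * D ^ 2 / K := by
    refine integral_norm_sq_le_of_fourierCoeff (h - low) hK (fun k hk ↦ ?_) fun k hk ↦ ?_
    · exact (h_tail k).trans (if_pos (Finset.mem_Icc.2 (abs_le.1 hk)))
    · rw [h_tail k, if_neg fun hk' ↦ (abs_le.2 (Finset.mem_Icc.1 hk')).not_gt hk]
      exact h_coeff k (abs_pos.1 ((Nat.cast_nonneg K).trans_lt hk))
  have h_subset : {x | 2 * η < ‖h x‖} ⊆ {x | η ^ 2 ≤ ‖(h - low) x‖ ^ 2} := fun x hx ↦ by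
    have hx' : 2 * η < ‖h x‖ := hx
    refine pow_le_pow_left₀ hη.le ?_ 2
    rw [ContinuousMap.sub_apply]
    linarith [norm_sub_norm_le (h x) (low x), h_norm_low x]
  have h_markov := mul_meas_ge_le_integral_of_nonneg
    (Filter.Eventually.of_forall fun x ↦ sq_nonneg ‖(h - low) x‖)
    (integrable_haarAddCircle (by fun_prop)) (η ^ 2)
  rw [← div_div, le_div_iff₀ (by positivity), mul_comm]
  exact (mul_le_mul_of_nonneg_left (measureReal_mono h_subset) (by positivity)).trans
    (h_markov.trans h_sq)

end FourierTail

section LargeDeviation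

/-- The deviation of the Fejér average of `f` from the mean of `f`, as a continuous function. -/
noncomputable def fejerDeviation (M : ℕ) (ω : UnitAddCircle) (f : C(UnitAddCircle, ℂ)) :
    C(UnitAddCircle, ℂ) :=
  ⟨fejerAverage M ω f, continuous_fejerAverage f.continuous M ω⟩
    - ContinuousMap.const _ (fourierCoeff f 0)

variable {f : C(UnitAddCircle, ℂ)} {ω : UnitAddCircle} {A c d D X : ℝ} {L M : ℕ}

lemma fourierCoeff_fejerDeviation (hM : M ≠ 0) (k : ℤ) :
    fourierCoeff (fejerDeviation M ω f) k
      = if k = 0 then 0 else fejerKernel M (k • ω) * fourierCoeff f k := by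
  set g : C(UnitAddCircle, ℂ) := ⟨fejerAverage M ω f, continuous_fejerAverage f.continuous M ω⟩
  have hg (j : ℤ) : fourierCoeff g j = fejerKernel M (j • ω) * fourierCoeff f j :=
    fourierCoeff_fejerAverage f.continuous M ω j
  have h_mean : fejerDeviation M ω f = g - ∑ j ∈ {0}, fourierCoeff g j • fourier j := by
    have hg_zero : fourierCoeff g 0 = fourierCoeff f 0 := by
      rw [hg, zero_smul, fejerKernel_zero hM, Complex.ofReal_one, one_mul]
    ext x
    rw [Finset.sum_singleton, hg_zero]
    simp [fejerDeviation, g]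
  rw [h_mean, fourierCoeff_sub_partialSum, hg]
  simp only [Finset.mem_singleton]

lemma norm_fourierCoeff_fejerDeviation_le (hM : M ≠ 0)
    (hf : ∀ k : ℤ, k ≠ 0 → ‖fourierCoeff f k‖ ≤ D / |(k : ℝ)|) {k : ℤ} (hk : k ≠ 0) :
    ‖fourierCoeff (fejerDeviation M ω f) k‖ ≤ fejerKernel M (k • ω) * (D / |(k : ℝ)|) := by
  rw [fourierCoeff_fejerDeviation hM, if_neg hk, norm_mul, Complex.norm_real, Real.norm_eq_abs,
    abs_of_nonneg (fejerKernel_nonneg _ _)]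
  exact mul_le_mul_of_nonneg_left (hf k hk) (fejerKernel_nonneg _ _)

lemma sum_norm_fourierCoeff_fejerDeviation_le (hM : M ≠ 0) (hD : 0 ≤ D)
    (hf : ∀ k : ℤ, k ≠ 0 → ‖fourierCoeff f k‖ ≤ D / |(k : ℝ)|) (hL : L ≠ 0)
    (hω : ∀ n : ℕ, n ≠ 0 → n ≤ L → 2 * d ≤ ‖n • ω‖) (hd : 0 < d) (K : ℕ) :
    ∑ k ∈ Finset.Icc (-(K : ℤ)) K, ‖fourierCoeff (fejerDeviation M ω f) k‖
      ≤ 2 * D * ((1 / (4 * M ^ 2 * d ^ 2) + 1 / L) * (1 + Real.log K)) := by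
  have h_pair (n : ℕ) (hn : n ∈ Finset.Icc 1 K) :
      ‖fourierCoeff (fejerDeviation M ω f) n‖ + ‖fourierCoeff (fejerDeviation M ω f) (-n)‖
        ≤ 2 * D * (fejerKernel M (n • ω) / n) := by
    have hn_ne : (n : ℤ) ≠ 0 := by
      rw [Finset.mem_Icc] at hn
      omega
    have h_pos := norm_fourierCoeff_fejerDeviation_le (ω := ω) hM hf hn_ne
    have h_neg := norm_fourierCoeff_fejerDeviation_le (ω := ω) hM hf (neg_ne_zero.2 hn_ne)
    rw [neg_smul, fejerKernel_neg, Int.cast_neg, abs_neg] at h_neg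
    rw [natCast_zsmul, Int.cast_natCast, Nat.abs_cast] at h_pos h_neg
    refine (add_le_add h_pos h_neg).trans_eq ?_
    ring
  rw [sum_Icc_neg_eq_add_sum, fourierCoeff_fejerDeviation hM, if_pos rfl, norm_zero, zero_add]
  refine (Finset.sum_le_sum h_pair).trans ?_
  rw [← Finset.mul_sum]
  gcongr
  exact sum_fejerKernel_div_le hL hω hd M K

lemma le_two_mul_natFloor {y : ℝ} (hy : 1 ≤ y) : y ≤ 2 * ⌊y⌋₊ := by
  have : (1 : ℝ) ≤ ⌊y⌋₊ := Nat.one_le_cast.2 (Nat.floor_pos.2 hy)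
  linarith [Nat.lt_floor_add_one y]

/-- With `L = ⌊M ^ (1 / (2A))⌋`, all divisors `‖n • ω‖`, `n ≤ L`, are at least `c / √M`. -/
lemma exists_scale_of_diophantine (hA : 1 ≤ A) (hc : 0 < c) (hM : M ≠ 0)
    (hω : ∀ n : ℕ, n ≠ 0 → n ≤ M → c * (n : ℝ) ^ (-A) ≤ ‖n • ω‖) :
    ∃ L : ℕ, L ≠ 0 ∧ ∃ d : ℝ, 0 < d ∧ (∀ n : ℕ, n ≠ 0 → n ≤ L → 2 * d ≤ ‖n • ω‖) ∧
      1 / (4 * M ^ 2 * d ^ 2) + 1 / L ≤ (1 / c ^ 2 + 2) / (M : ℝ) ^ (1 / (2 * A)) := by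
  have hM_pos : (0 : ℝ) < M := by positivity
  have hM_one : (1 : ℝ) ≤ M := Nat.one_le_cast.2 (Nat.one_le_iff_ne_zero.2 hM)
  set Y := (M : ℝ) ^ (1 / (2 * A)) with hY
  have hY_one : 1 ≤ Y := Real.one_le_rpow hM_one (by positivity)
  have hY_le : Y ≤ M := by
    refine (Real.rpow_le_rpow_of_exponent_le hM_one ?_).trans_eq (Real.rpow_one _)
    rw [div_le_one (by positivity)]
    linarith
  have hY_rpow : Y ^ (-A) = (√M)⁻¹ := by
    rw [hY, ← Real.rpow_mul hM_pos.le, Real.sqrt_eq_rpow, ← Real.rpow_neg hM_pos.le]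
    congr 1
    field_simp
  have hL_pos : 0 < ⌊Y⌋₊ := Nat.floor_pos.2 hY_one
  have hL_le : (⌊Y⌋₊ : ℝ) ≤ Y := Nat.floor_le (by positivity)
  refine ⟨⌊Y⌋₊, hL_pos.ne', c * (√M)⁻¹ / 2, by positivity, fun n hn hnL ↦ ?_, ?_⟩
  · have hnY : (n : ℝ) ≤ Y := (Nat.cast_le.2 hnL).trans hL_le
    calc 2 * (c * (√M)⁻¹ / 2) = c * Y ^ (-A) := by rw [hY_rpow]; ring
      _ ≤ c * (n : ℝ) ^ (-A) := by
          gcongr ?_ * ?_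
          exact Real.rpow_le_rpow_of_nonpos (by positivity) hnY (by linarith)
      _ ≤ ‖n • ω‖ := hω n hn (Nat.cast_le.1 (hnY.trans hY_le))
  · have h_sq : 4 * (M : ℝ) ^ 2 * (c * (√M)⁻¹ / 2) ^ 2 = c ^ 2 * M := by
      rw [div_pow, mul_pow, inv_pow, Real.sq_sqrt hM_pos.le]
      field_simp
      norm_num
    rw [h_sq, add_div, div_div]
    gcongr ?_ + ?_
    · gcongr
    · rw [div_le_div_iff₀ (by positivity) (by positivity), one_mul]
      exact le_two_mul_natFloor hY_one

lemma log_natCeil_exp_le (hX : 0 ≤ X) : Real.log ⌈Real.exp X⌉₊ ≤ X + 1 := by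
  have h_pos : (0 : ℝ) < ⌈Real.exp X⌉₊ := Nat.cast_pos.2 (Nat.ceil_pos.2 (Real.exp_pos X))
  rw [Real.log_le_iff_le_exp h_pos, Real.exp_add]
  nlinarith [Nat.ceil_lt_add_one (Real.exp_pos X).le, Real.add_one_le_exp (1 : ℝ),
    Real.one_le_exp hX]

lemma sq_mul_sq_div_exp_lt (hX : 384 * D ^ 2 < X) :
    8 * D ^ 2 * X ^ 2 / Real.exp X < Real.exp (-(1 / 2) * X) := by
  have hX_pos : 0 < X := by nlinarith [sq_nonneg D]
  rw [div_lt_iff₀ (Real.exp_pos X), ← Real.exp_add]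
  calc 8 * D ^ 2 * X ^ 2 < (X / 2) ^ 3 / Nat.factorial 3 := by
        norm_num [Nat.factorial]
        nlinarith [pow_pos hX_pos 2]
    _ ≤ Real.exp (X / 2) := Real.pow_div_factorial_le_exp _ (by positivity) 3
    _ = Real.exp (-(1 / 2) * X + X) := by ring_nf

lemma sum_norm_fourierCoeff_fejerDeviation_le_inv (hA : 1 ≤ A) (hc : 0 < c) (hM : M ≠ 0)
    (hD : 0 ≤ D) (hX : X = (M : ℝ) ^ (1 / (50 * A))) (hXD : 12 * D * (1 / c ^ 2 + 2) ≤ X)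
    (hω : ∀ n : ℕ, n ≠ 0 → n ≤ M → c * (n : ℝ) ^ (-A) ≤ ‖n • ω‖)
    (hf : ∀ k : ℤ, k ≠ 0 → ‖fourierCoeff f k‖ ≤ D / |(k : ℝ)|) :
    ∑ k ∈ Finset.Icc (-(⌈Real.exp X⌉₊ : ℤ)) ⌈Real.exp X⌉₊, ‖fourierCoeff (fejerDeviation M ω f) k‖
      ≤ X⁻¹ / 2 := by
  have hX_one : 1 ≤ X := by
    rw [hX]
    exact Real.one_le_rpow (Nat.one_le_cast.2 (Nat.one_le_iff_ne_zero.2 hM)) (by positivity)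
  have hX_pow : X ^ 25 = (M : ℝ) ^ (1 / (2 * A)) := by
    rw [hX, ← Real.rpow_natCast, ← Real.rpow_mul M.cast_nonneg]
    congr 1
    push_cast
    field_simp
    norm_num
  obtain ⟨L, hL, d, hd, hωL, h_scale⟩ := exists_scale_of_diophantine hA hc hM hω
  rw [← hX_pow] at h_scale
  calc _ ≤ 2 * D * ((1 / (4 * M ^ 2 * d ^ 2) + 1 / L) * (1 + Real.log ⌈Real.exp X⌉₊)) :=
        sum_norm_fourierCoeff_fejerDeviation_le hM hD hf hL hωL hd _
    _ ≤ 2 * D * ((1 / c ^ 2 + 2) / X ^ 25 * (3 * X)) := by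
        gcongr
        linarith [log_natCeil_exp_le (X := X) (by positivity)]
    _ = 12 * D * (1 / c ^ 2 + 2) * X / X ^ 25 / 2 := by ring
    _ ≤ X * X / X ^ 25 / 2 := by gcongr
    _ ≤ X * X / X ^ 3 / 2 := by gcongr; norm_num
    _ = X⁻¹ / 2 := by field_simp

lemma haarAddCircle_real_lt_norm_fejerDeviation_lt (hA : 1 ≤ A) (hc : 0 < c) (hM : M ≠ 0)
    (hD : 0 ≤ D) (hX : X = (M : ℝ) ^ (1 / (50 * A))) (hXD : 12 * D * (1 / c ^ 2 + 2) ≤ X)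
    (hXD_sq : 384 * D ^ 2 < X) (hω : ∀ n : ℕ, n ≠ 0 → n ≤ M → c * (n : ℝ) ^ (-A) ≤ ‖n • ω‖)
    (hf : ∀ k : ℤ, k ≠ 0 → ‖fourierCoeff f k‖ ≤ D / |(k : ℝ)|) :
    AddCircle.haarAddCircle.real {x | X⁻¹ < ‖fejerDeviation M ω f x‖}
      < Real.exp (-(1 / 2) * X) := by
  have hX_pos : 0 < X := hX ▸ by positivity
  set K := ⌈Real.exp X⌉₊
  have hK : Real.exp X ≤ K := Nat.le_ceil _
  have hK_ne : K ≠ 0 := (Nat.ceil_pos.2 (Real.exp_pos X)).ne'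
  have h_low : ∑ k ∈ Finset.Icc (-(K : ℤ)) K, ‖fourierCoeff (fejerDeviation M ω f) k‖
      ≤ X⁻¹ / 2 :=
    sum_norm_fourierCoeff_fejerDeviation_le_inv hA hc hM hD hX hXD hω hf
  have h_coeff (k : ℤ) (hk : k ≠ 0) :
      ‖fourierCoeff (fejerDeviation M ω f) k‖ ≤ D / |(k : ℝ)| :=
    (norm_fourierCoeff_fejerDeviation_le hM hf hk).trans
      (mul_le_of_le_one_left (by positivity) (fejerKernel_le_one _ _))
  calc _ = AddCircle.haarAddCircle.real {x | 2 * (X⁻¹ / 2) < ‖fejerDeviation M ω f x‖} := by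
        rw [mul_div_cancel₀ _ two_ne_zero]
    _ ≤ 2 * D ^ 2 / (K * (X⁻¹ / 2) ^ 2) :=
        haarAddCircle_real_lt_norm_le _ hK_ne (by positivity) h_coeff h_low
    _ ≤ 2 * D ^ 2 / (Real.exp X * (X⁻¹ / 2) ^ 2) := by gcongr
    _ = 8 * D ^ 2 * X ^ 2 / Real.exp X := by field_simp; ring
    _ < _ := sq_mul_sq_div_exp_lt hXD_sq

end LargeDeviation

section UnitInterval

lemma volume_Icc_inter_preimage_coe {S : Set UnitAddCircle} (hS : MeasurableSet S) :
    volume (Icc (0 : ℝ) 1 ∩ (↑) ⁻¹' S) = AddCircle.haarAddCircle S := by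
  have h_pres := (UnitAddCircle.measurePreserving_mk 0).measure_preimage hS.nullMeasurableSet
  rw [zero_add, Measure.restrict_congr_set Ioc_ae_eq_Icc,
    Measure.restrict_apply' measurableSet_Icc, inter_comm] at h_pres
  rw [h_pres, AddCircle.volume_eq_smul_haarAddCircle, ENNReal.ofReal_one, one_smul]

lemma exists_continuousMap_unitAddCircle {u : ℝ → ℝ} (hu : Continuous u)
    (h_per : Function.Periodic u 1) : ∃ f : C(UnitAddCircle, ℂ), ∀ x : ℝ, f x = u x := by
  have h_lift : Continuous h_per.lift := hu.quotient_lift _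
  exact ⟨⟨fun x ↦ h_per.lift x, by fun_prop⟩, fun x ↦ rfl⟩

lemma fejerDeviation_coe {f : C(UnitAddCircle, ℂ)} {u : ℝ → ℝ} (hf : ∀ x : ℝ, f x = u x) (M : ℕ)
    (ω x : ℝ) : fejerDeviation M (ω : UnitAddCircle) f x
      = ((∑ m ∈ Finset.Icc (-(M : ℤ) + 1) (M - 1),
            ((M : ℝ) - |(m : ℝ)|) / (M : ℝ) ^ 2 * u (x + m * ω)
          - ∫ t in (0 : ℝ)..1, u t : ℝ) : ℂ) := by
  have h_mean : fourierCoeff f 0 = ((∫ t in (0 : ℝ)..1, u t : ℝ) : ℂ) := by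
    rw [fourierCoeff_eq_intervalIntegral _ _ 0, ← intervalIntegral.integral_ofReal]
    simp [hf]
  have h_shift (m : ℤ) : f (x + m • (ω : UnitAddCircle)) = u (x + m * ω) := by
    rw [← hf, AddCircle.coe_add, ← zsmul_eq_mul, AddCircle.coe_zsmul]
  rw [Complex.ofReal_sub, ← h_mean, Complex.ofReal_sum]
  simp only [fejerDeviation, ContinuousMap.sub_apply, ContinuousMap.coe_mk, fejerAverage,
    ContinuousMap.const_apply, h_shift, Complex.ofReal_mul]

lemma volume_lt_abs_fejerAverage_sub_eq {f : C(UnitAddCircle, ℂ)} {u : ℝ → ℝ}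
    (hf : ∀ x : ℝ, f x = u x) (M : ℕ) (ω a : ℝ) :
    volume {x : ℝ | x ∈ Icc (0 : ℝ) 1 ∧ a < |(∑ m ∈ Finset.Icc (-(M : ℤ) + 1) (M - 1),
        ((M : ℝ) - |(m : ℝ)|) / (M : ℝ) ^ 2 * u (x + m * ω)) - ∫ t in (0 : ℝ)..1, u t|}
      = AddCircle.haarAddCircle {x | a < ‖fejerDeviation M (ω : UnitAddCircle) f x‖} := by
  rw [← volume_Icc_inter_preimage_coe (isOpen_lt (by fun_prop) (by fun_prop)).measurableSet]
  congr 1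
  ext x
  rw [mem_inter_iff, mem_preimage, mem_ofPred_eq, mem_ofPred_eq, fejerDeviation_coe hf,
    Complex.norm_real, Real.norm_eq_abs]

lemma distToInt_natCast_mul (n : ℕ) (ω : ℝ) : distToInt (n * ω) = ‖n • (ω : UnitAddCircle)‖ := by
  rw [← AddCircle.coe_nsmul, nsmul_eq_mul, UnitAddCircle.norm_eq, distToInt]

lemma Subharmonic.continuous_comp_ofReal {U : Set ℂ} {w : ℂ → ℝ} (hw : Subharmonic U w)
    (hU : ∀ x : ℝ, (x : ℂ) ∈ U) : Continuous fun x : ℝ ↦ w x :=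
  hw.1.comp_continuous Complex.continuous_ofReal hU

end UnitInterval

end

theorem large_deviation_subharmonic_finite_DC_general {A c : ℝ} (hA : 1 ≤ A) (hc : 0 < c) (B : ℝ) :
    ∀ᶠ M : ℕ in Filter.atTop, ∀ ω : ℝ,
      (∀ k : ℤ, k ≠ 0 → |k| ≤ (M : ℤ) → c * (|k| : ℝ) ^ (-A) < distToInt (k * ω)) →
      ∀ u : ℝ → ℝ, Function.Periodic u 1 →
      ∀ utilde : ℂ → ℝ, (∀ x : ℝ, utilde x = u x) →
        Subharmonic {z : ℂ | |z.im| < 1} utilde → (∀ z : ℂ, |z.im| < 1 → |utilde z| ≤ B) →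
        volume {x : ℝ | x ∈ Set.Icc (0 : ℝ) 1 ∧ (M : ℝ) ^ (-(1 / (50 * A))) <
            |(∑ m ∈ Finset.Icc (-(M : ℤ) + 1) ((M : ℤ) - 1),
                (((M : ℝ) - (|m| : ℝ)) / (M : ℝ) ^ 2) * u (x + m * ω)) - ∫ t in (0 : ℝ)..1, u t|}
          < ENNReal.ofReal (Real.exp (-(1 / 2) * (M : ℝ) ^ (1 / (50 * A)))) := by
  obtain ⟨D, hD, h_decay⟩ := exists_norm_fourierCoeff_le_of_subharmonic
  have h_tendsto : Filter.Tendsto (fun M : ℕ ↦ (M : ℝ) ^ (1 / (50 * A))) .atTop .atTop :=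
    (tendsto_rpow_atTop (by positivity)).comp tendsto_natCast_atTop_atTop
  filter_upwards [h_tendsto.eventually_ge_atTop (12 * (D * B) * (1 / c ^ 2 + 2)),
    h_tendsto.eventually_gt_atTop (384 * (D * B) ^ 2), Filter.eventually_ne_atTop 0]
    with M hM_low hM_tail hM ω hω u h_per utilde hu h_sub h_bound
  have hB : 0 ≤ B := (abs_nonneg _).trans (h_bound 0 (by simp))
  have hu_cont : Continuous u := by
    simpa only [hu] using h_sub.continuous_comp_ofReal (by simp)
  obtain ⟨f, hf⟩ := exists_continuousMap_unitAddCircle hu_cont h_per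
  have hω_norm (n : ℕ) (hn : n ≠ 0) (hnM : n ≤ M) :
      c * (n : ℝ) ^ (-A) ≤ ‖n • (ω : UnitAddCircle)‖ := by
    have := hω n (Nat.cast_ne_zero.2 hn) (by rwa [Nat.abs_cast, Nat.cast_le])
    rw [Int.cast_natCast, Nat.abs_cast, distToInt_natCast_mul] at this
    exact this.le
  rw [volume_lt_abs_fejerAverage_sub_eq hf, Real.rpow_neg M.cast_nonneg,
    ← ofReal_measureReal, ENNReal.ofReal_lt_ofReal_iff (Real.exp_pos _)]
  exact haarAddCircle_real_lt_norm_fejerDeviation_lt hA hc hM (by positivity) rfl hM_low hM_tail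
    hω_norm (h_decay utilde B f h_sub h_bound fun x ↦ by rw [hf, hu])

/-- Large deviation theorem for Fejér-type averages of subharmonic functions, under
the finite Diophantine condition `‖kω‖ > c·|k|^{-A}` for `0 < |k| ≤ M` only.
One may take `σ = 1/(50A)`. -/
theorem large_deviation_subharmonic_finite_DC (A : ℝ) (hA : 1 ≤ A) :
    ∃ σ : ℝ, 0 < σ ∧ σ = 1 / (50 * A) ∧
      ∀ c B : ℝ, 0 < c → 1 ≤ B →
        ∃ ctil : ℝ, 0 < ctil ∧ ∃ M₀ : ℕ,
          ∀ M : ℕ, 0 < M → M₀ ≤ M →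
          ∀ ω : ℝ,
            (∀ k : ℤ, k ≠ 0 → |k| ≤ (M : ℤ) →
              c * (|k| : ℝ) ^ (-A) < distToInt (k * ω)) →
          ∀ u : ℝ → ℝ, Function.Periodic u 1 → (∀ x : ℝ, |u x| ≤ 1) →
          ∀ utilde : ℂ → ℝ,
            (∀ x : ℝ, utilde (x : ℂ) = u x) →
            Subharmonic {z : ℂ | |z.im| < 1} utilde →
            (∀ z : ℂ, |z.im| < 1 → |utilde z| ≤ B) →
            volume {x : ℝ | x ∈ Set.Icc (0:ℝ) 1 ∧
                (M : ℝ) ^ (-σ) <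
                  |(∑ m ∈ Finset.Icc (-(M : ℤ) + 1) ((M : ℤ) - 1),
                      (((M : ℝ) - (|m| : ℝ)) / (M : ℝ) ^ 2) * u (x + m * ω))
                    - ∫ t in (0:ℝ)..1, u t|}
              < ENNReal.ofReal (Real.exp (-ctil * (M : ℝ) ^ σ)) := by
  refine ⟨1 / (50 * A), by positivity, rfl, fun c B hc _ ↦ ⟨1 / 2, by norm_num, ?_⟩⟩
  obtain ⟨M₀, hM₀⟩ :=
    Filter.eventually_atTop.1 (large_deviation_subharmonic_finite_DC_general hA hc B)
  exact ⟨M₀, fun M _ hM ω hω u h_per _ ↦ hM₀ M hM ω hω u h_per⟩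
end

section
/- Let ω, E ∈ ℝ, ε > 0, and let φ̂ : ℤ → ℂ satisfy ε·∑_{n∈ℤ}|φ̂(n)| < 1. Then for every positive integer N, ∫₀¹ (1/N)·log(|det B_N(x)| + 10^{−N}) dx > (1/2)·log(1+E²) − log 2 + log(1 − ε·∑_{n∈ℤ}|φ̂(n)|). -/
open MeasureTheory

/-- The cosine-regularized matrix `B_N(x)`, with
`B_N(x)(n,n) = sin(π(x+nω)) + (ε·φ̂(0) - E)·cos(π(x+nω))` and
`B_N(x)(n,n') = ε·φ̂(n-n')·cos(π(x+nω))` for `n ≠ n'`. -/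
noncomputable def BN (ω E ε : ℝ) (φh : ℤ → ℂ) (N : ℕ) (x : ℝ) :
    Matrix (Fin N) (Fin N) ℂ :=
  fun n n' =>
    if n = n' then
      (Real.sin (Real.pi * (x + n * ω)) : ℂ)
        + ((ε : ℂ) * φh 0 - (E : ℂ)) * (Real.cos (Real.pi * (x + n * ω)) : ℂ)
    else (ε : ℂ) * φh ((n : ℤ) - (n' : ℤ)) * (Real.cos (Real.pi * (x + n * ω)) : ℂ)

/-!
With `A = ε T - E`, where `T` is the Toeplitz matrix of `φ̂`, the `n`-th row of `B_N(x)` is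
`sin α e_n + cos α A_n` for `α = π (x + n ω)`. Multiplying it by the unimodular number `i e^{iα}`
turns it into a polynomial of degree one in `z = e^{2πix}`, so `|det B_N(x)| = |p(z)|` for a
polynomial `p` with `p(0) = ± det ((1 - iA) / 2)`. Jensen's formula bounds the mean of `log |p|`
over the unit circle below by `log |p(0)|`, and adding `10^{-N}` makes the inequality strict.
Finally `1 - iA = (1 + iE) - iεT`, and `iεT` has maximal row sum at most `s = ε ∑ |φ̂(n)|`, so every
eigenvalue of `1 - iA` has modulus at least `√(1 + E²) - s ≥ √(1 + E²) (1 - s)`.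
-/

open Matrix Polynomial Real
-- `‖M‖` for a matrix `M` is its maximal absolute row sum.
open scoped Matrix.Norms.Operator

section CircleAverage

theorem integral_comp_circleMap_two_pi_mul {F : Type*} [NormedAddCommGroup F] [NormedSpace ℝ F]
    (f : ℂ → F) (c : ℂ) (R : ℝ) :
    ∫ x in (0 : ℝ)..1, f (circleMap c R (2 * π * x)) = circleAverage f c R := by
  rw [circleAverage_def, intervalIntegral.integral_comp_mul_left (fun θ => f (circleMap c R θ))
    two_pi_pos.ne', mul_zero, mul_one]

theorem circleAverage_lt_circleAverage_of_countable {f g : ℂ → ℝ} {c : ℂ} {R : ℝ} {s : Set ℂ}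
    (hf : CircleIntegrable f c R) (hg : CircleIntegrable g c R) (hR : R ≠ 0) (hs : s.Countable)
    (hlt : ∀ z ∈ Metric.sphere c |R|, z ∉ s → f z < g z) :
    circleAverage f c R < circleAverage g c R := by
  have ae_lt : ∀ᵐ θ ∂volume.restrict (Set.Ioc 0 (2 * π)),
      f (circleMap c R θ) < g (circleMap c R θ) := by
    refine ae_restrict_of_ae ?_
    filter_upwards [(hs.preimage_circleMap c hR).ae_notMem volume] with θ hθ
    exact hlt _ (circleMap_mem_sphere' c R θ) hθ
  have : NeZero (volume.restrict (Set.Ioc 0 (2 * π))) :=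
    ⟨by simp [Measure.restrict_eq_zero, pi_pos]⟩
  refine mul_lt_mul_of_pos_left ?_ (inv_pos.2 two_pi_pos)
  exact intervalIntegral.integral_lt_integral_of_ae_le_of_measure_setOfPred_lt_ne_zero
    two_pi_pos.le hf hg (ae_lt.mono fun _ => le_of_lt) (frequently_ae_iff.1 ae_lt.frequently)

end CircleAverage

section MahlerMeasure

variable {p : ℂ[X]}

theorem log_norm_coeff_zero_le_logMahlerMeasure (hp : p.coeff 0 ≠ 0) :
    log ‖p.coeff 0‖ ≤ p.logMahlerMeasure := by
  rw [logMahlerMeasure_eq_log_MahlerMeasure]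
  exact log_le_log (norm_pos_iff.2 hp) (by simpa using p.norm_coeff_le_choose_mul_mahlerMeasure 0)

theorem logMahlerMeasure_lt_circleAverage_log_norm_add (hp : p ≠ 0) {δ : ℝ} (hδ : 0 < δ) :
    p.logMahlerMeasure < circleAverage (fun z => log (‖p.eval z‖ + δ)) 0 1 := by
  have continuous_log : Continuous fun z => log (‖p.eval z‖ + δ) :=
    (p.continuous.norm.add continuous_const).log
      fun z => (add_pos_of_nonneg_of_pos (norm_nonneg _) hδ).ne'
  refine circleAverage_lt_circleAverage_of_countable p.intervalIntegrable_mahlerMeasure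
    (continuous_log.comp (continuous_circleMap 0 1) |>.intervalIntegrable _ _) one_ne_zero
    p.roots.toFinset.countable_toSet fun z _ hz => ?_
  have eval_ne_zero : p.eval z ≠ 0 := by simpa [hp] using hz
  exact log_lt_log (norm_pos_iff.2 eval_ne_zero) (by linarith)

end MahlerMeasure

section Matrix

variable {n : Type*} [Fintype n] [DecidableEq n]

theorem eval_det_X_smul_add_C {R : Type*} [CommRing R] (U V : Matrix n n R) (z : R) :
    (det ((X : R[X]) • U.map C + V.map C)).eval z = det (z • U + V) := by
  rw [← coe_evalRingHom, RingHom.map_det]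
  congr 1
  ext i j
  simp [mul_comm z]

theorem log_norm_det_lt_circleAverage {U V : Matrix n n ℂ} (hV : V.det ≠ 0) {δ : ℝ} (hδ : 0 < δ) :
    log ‖V.det‖ < circleAverage (fun z => log (‖(z • U + V).det‖ + δ)) 0 1 := by
  set p : ℂ[X] := det ((X : ℂ[X]) • U.map C + V.map C) with hp
  have coeff_zero : p.coeff 0 = V.det := coeff_det_X_add_C_zero U V
  have p_ne_zero : p ≠ 0 := fun h => hV (by rw [← coeff_zero, h, Polynomial.coeff_zero])
  calc log ‖V.det‖ = log ‖p.coeff 0‖ := by rw [coeff_zero]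
    _ ≤ p.logMahlerMeasure := log_norm_coeff_zero_le_logMahlerMeasure (coeff_zero ▸ hV)
    _ < circleAverage (fun z => log (‖p.eval z‖ + δ)) 0 1 :=
      logMahlerMeasure_lt_circleAverage_log_norm_add p_ne_zero hδ
    _ = _ := by simp only [hp, eval_det_X_smul_add_C]

theorem norm_le_norm_of_isRoot_charpoly {𝕜 : Type*} [NormedField 𝕜] {M : Matrix n n 𝕜} {μ : 𝕜}
    (hμ : M.charpoly.IsRoot μ) : ‖μ‖ ≤ ‖M‖ := by
  rw [← charpoly_toLin', ← Module.End.hasEigenvalue_iff_isRoot_charpoly] at hμ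
  obtain ⟨v, hv⟩ := hμ.exists_hasEigenvector
  have mulVec_eq : M *ᵥ v = μ • v := hv.apply_eq_smul
  refine le_of_mul_le_mul_right ?_ (norm_pos_iff.2 hv.2)
  rw [← norm_smul, ← mulVec_eq]
  exact linfty_opNorm_mulVec M v

theorem pow_sub_norm_le_norm_det_scalar_sub {𝕜 : Type*} [NormedField 𝕜] [IsAlgClosed 𝕜]
    {c : 𝕜} {M : Matrix n n 𝕜} (hM : ‖M‖ ≤ ‖c‖) :
    (‖c‖ - ‖M‖) ^ Fintype.card n ≤ ‖(scalar n c - M).det‖ := by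
  have card_roots : M.charpoly.roots.card = Fintype.card n := by
    rw [← (IsAlgClosed.splits _).natDegree_eq_card_roots, charpoly_natDegree_eq_dim]
  have root_bound : ∀ μ ∈ M.charpoly.roots, ‖c‖ - ‖M‖ ≤ ‖c - μ‖ := fun μ hμ => by
    have norm_root_le : ‖μ‖ ≤ ‖M‖ := norm_le_norm_of_isRoot_charpoly (isRoot_of_mem_roots hμ)
    linarith [norm_sub_norm_le c μ]
  calc (‖c‖ - ‖M‖) ^ Fintype.card n
      = (M.charpoly.roots.map fun _ => ‖c‖ - ‖M‖).prod := by
        rw [Multiset.map_const', Multiset.prod_replicate, card_roots]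
    _ ≤ (M.charpoly.roots.map fun μ => ‖c - μ‖).prod :=
      Multiset.prod_map_le_prod_map₀ _ _ (fun _ _ => sub_nonneg.2 hM) root_bound
    _ = ‖(scalar n c - M).det‖ := by
      rw [← eval_charpoly, (IsAlgClosed.splits _).eval_eq_prod_roots_of_monic M.charpoly_monic,
        ← normHom_apply, map_multiset_prod, Multiset.map_map]
      rfl

end Matrix

section SinAddCosMul

variable {n : Type*} [Fintype n] [DecidableEq n]

/-- The matrix `S(x) + C(x) A`, where `S(x)` and `C(x)` are the diagonal matrices with entries
`sin (π (x + θ i))` and `cos (π (x + θ i))`; it is `B_N(x)` with arbitrary phases `θ i` in place of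
`n ω` and an arbitrary matrix `A` in place of `ε T - E`. -/
noncomputable def sinAddCosMul (θ : n → ℝ) (A : Matrix n n ℂ) (x : ℝ) : Matrix n n ℂ :=
  diagonal (fun i => (sin (π * (x + θ i)) : ℂ)) + diagonal (fun i => (cos (π * (x + θ i)) : ℂ)) * A

theorem I_mul_exp_mul_I_mul_sin (α : ℂ) :
    Complex.I * Complex.exp (α * Complex.I) * Complex.sin α
      = (Complex.exp (2 * α * Complex.I) - 1) / 2 := by
  rw [Complex.exp_mul_I, Complex.exp_mul_I, Complex.cos_two_mul, Complex.sin_two_mul]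
  linear_combination Complex.sin α ^ 2 * Complex.I_sq - Complex.sin_sq_add_cos_sq α

theorem exp_mul_I_mul_cos (α : ℂ) :
    Complex.exp (α * Complex.I) * Complex.cos α = (Complex.exp (2 * α * Complex.I) + 1) / 2 := by
  rw [Complex.exp_mul_I, Complex.exp_mul_I, Complex.cos_two_mul, Complex.sin_two_mul]
  ring

theorem diagonal_mul_sinAddCosMul (θ : n → ℝ) (A : Matrix n n ℂ) (x : ℝ) :
    diagonal (fun i => Complex.I * Complex.exp ((π * (x + θ i) : ℝ) * Complex.I)) *
        sinAddCosMul θ A x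
      = circleMap 0 1 (2 * π * x) • ((1 / 2 : ℂ) •
          (diagonal (fun i => Complex.exp ((2 * π * θ i : ℝ) * Complex.I)) * (1 + Complex.I • A)))
        + (-1 / 2 : ℂ) • (1 - Complex.I • A) := by
  ext i j
  set α : ℂ := ((π * (x + θ i) : ℝ) : ℂ) with hα
  have exp_two : Complex.exp (2 * α * Complex.I)
      = circleMap 0 1 (2 * π * x) * Complex.exp ((2 * π * θ i : ℝ) * Complex.I) := by
    rw [circleMap_zero, Complex.ofReal_one, one_mul, ← Complex.exp_add, hα]
    push_cast
    ring_nf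
  have hsin := I_mul_exp_mul_I_mul_sin α
  have hcos := exp_mul_I_mul_cos α
  rw [exp_two] at hsin hcos
  simp only [sinAddCosMul, diagonal_mul, Matrix.add_apply, Matrix.sub_apply, Matrix.smul_apply,
    smul_eq_mul, Complex.ofReal_sin, Complex.ofReal_cos, diagonal_apply, one_apply, ← hα]
  split_ifs
  · linear_combination hsin + Complex.I * A i j * hcos
  · linear_combination Complex.I * A i j * hcos

theorem exists_norm_det_sinAddCosMul_eq (θ : n → ℝ) (A : Matrix n n ℂ) :
    ∃ U : Matrix n n ℂ, ∀ x : ℝ, ‖(sinAddCosMul θ A x).det‖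
      = ‖(circleMap 0 1 (2 * π * x) • U + (-1 / 2 : ℂ) • (1 - Complex.I • A)).det‖ := by
  refine ⟨(1 / 2 : ℂ) • (diagonal (fun i => Complex.exp ((2 * π * θ i : ℝ) * Complex.I)) *
    (1 + Complex.I • A)), fun x => ?_⟩
  rw [← diagonal_mul_sinAddCosMul, det_mul, det_diagonal, norm_mul, norm_prod]
  simp only [norm_mul, Complex.norm_I, Complex.norm_exp_ofReal_mul_I, mul_one,
    Finset.prod_const_one, one_mul]

theorem log_norm_det_lt_integral_log_norm_det_sinAddCosMul (θ : n → ℝ) {A : Matrix n n ℂ}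
    (hA : (1 - Complex.I • A).det ≠ 0) {δ : ℝ} (hδ : 0 < δ) :
    log (‖(1 - Complex.I • A).det‖ / 2 ^ Fintype.card n)
      < ∫ x in (0 : ℝ)..1, log (‖(sinAddCosMul θ A x).det‖ + δ) := by
  obtain ⟨U, norm_det_eq⟩ := exists_norm_det_sinAddCosMul_eq θ A
  set V : Matrix n n ℂ := (-1 / 2 : ℂ) • (1 - Complex.I • A) with hV
  have norm_det_V : ‖V.det‖ = ‖(1 - Complex.I • A).det‖ / 2 ^ Fintype.card n := by
    rw [hV, det_smul]
    simp [div_eq_inv_mul]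
  simp only [norm_det_eq]
  rw [← norm_det_V, integral_comp_circleMap_two_pi_mul (fun z => log (‖(z • U + V).det‖ + δ))]
  exact log_norm_det_lt_circleAverage (norm_pos_iff.1 (norm_det_V ▸ by positivity)) hδ

theorem pow_le_norm_det_one_sub_I_smul_sub_smul_one (E : ℝ) {M : Matrix n n ℂ} {s : ℝ}
    (hM : ‖M‖ ≤ s) (hs : s ≤ 1) :
    (√(1 + E ^ 2) * (1 - s)) ^ Fintype.card n
      ≤ ‖(1 - Complex.I • (M - (E : ℂ) • (1 : Matrix n n ℂ))).det‖ := by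
  have norm_eq : ‖1 + E * Complex.I‖ = √(1 + E ^ 2) := by
    simpa using Complex.norm_add_mul_I 1 E
  have one_le : 1 ≤ √(1 + E ^ 2) := one_le_sqrt.2 (by nlinarith)
  have norm_I_smul : ‖Complex.I • M‖ = ‖M‖ := by simp [norm_smul]
  have matrix_eq : 1 - Complex.I • (M - (E : ℂ) • (1 : Matrix n n ℂ))
      = scalar n (1 + E * Complex.I) - Complex.I • M := by
    ext i j
    simp only [scalar_apply, diagonal_apply, Matrix.sub_apply, Matrix.smul_apply, one_apply,
      smul_eq_mul]
    split_ifs <;> ring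
  rw [matrix_eq]
  calc (√(1 + E ^ 2) * (1 - s)) ^ Fintype.card n
      ≤ (‖1 + E * Complex.I‖ - ‖Complex.I • M‖) ^ Fintype.card n := by
        refine pow_le_pow_left₀ (mul_nonneg (sqrt_nonneg _) (sub_nonneg.2 hs)) ?_ _
        rw [norm_eq, norm_I_smul]
        nlinarith [norm_nonneg M]
    _ ≤ _ := pow_sub_norm_le_norm_det_scalar_sub (by rw [norm_eq, norm_I_smul]; linarith)

end SinAddCosMul

section Toeplitz

/-- The `N × N` Toeplitz matrix with `(i, j)` entry `a (i - j)`, which for `a = φ̂` is the hopping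
term of `B_N`; the difference `i - j` is taken in `ℤ`. -/
def toeplitz {α : Type*} (a : ℤ → α) (N : ℕ) : Matrix (Fin N) (Fin N) α :=
  of fun i j => a ((i : ℤ) - (j : ℤ))

theorem norm_toeplitz_le_tsum {α : Type*} [SeminormedAddCommGroup α] {a : ℤ → α}
    (ha : Summable fun k => ‖a k‖) (N : ℕ) : ‖toeplitz a N‖ ≤ ∑' k, ‖a k‖ := by
  have row_sum_le (i : Fin N) : ∑ j, ‖toeplitz a N i j‖ ≤ ∑' k, ‖a k‖ := by
    have sub_injective : Function.Injective fun j : Fin N => (i : ℤ) - (j : ℤ) := fun j j' h =>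
      Fin.ext (by simpa using h)
    simpa [toeplitz] using
      ha.sum_le_tsum (Finset.univ.map ⟨_, sub_injective⟩) fun _ _ => norm_nonneg _
  have tsum_norm_nonneg : 0 ≤ ∑' k, ‖a k‖ := tsum_nonneg fun _ => norm_nonneg _
  rw [linfty_opNorm_def, ← Real.le_toNNReal_iff_coe_le tsum_norm_nonneg]
  refine Finset.sup_le fun i _ => (Real.le_toNNReal_iff_coe_le tsum_norm_nonneg).2 ?_
  simpa using row_sum_le i

theorem BN_eq_sinAddCosMul (ω E ε : ℝ) (φh : ℤ → ℂ) (N : ℕ) (x : ℝ) :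
    BN ω E ε φh N x =
      sinAddCosMul (fun i : Fin N => i * ω) ((ε : ℂ) • toeplitz φh N - (E : ℂ) • 1) x := by
  ext i j
  by_cases hij : i = j <;> simp [BN, sinAddCosMul, toeplitz, hij, mul_comm]

end Toeplitz

/-- Lower bound for the mean of `(1/N)·log(|det B_N(x)| + 10^{-N})` over a period. -/
theorem mean_log_det_lower_bound
    (ω E ε : ℝ) (hε : 0 < ε) (φh : ℤ → ℂ)
    (hsum : Summable fun n : ℤ => ‖φh n‖)
    (hsmall : ε * ∑' n : ℤ, ‖φh n‖ < 1) (N : ℕ) (hN : 0 < N) :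
    (1 / 2) * Real.log (1 + E ^ 2) - Real.log 2
        + Real.log (1 - ε * ∑' n : ℤ, ‖φh n‖)
      < ∫ x in (0:ℝ)..1,
          (1 / (N : ℝ)) * Real.log (‖(BN ω E ε φh N x).det‖ + (10 : ℝ) ^ (-(N : ℤ))) := by
  have norm_toeplitz : ‖(ε : ℂ) • toeplitz φh N‖ ≤ ε * ∑' n : ℤ, ‖φh n‖ := by
    rw [norm_smul, Complex.norm_of_nonneg hε.le]
    gcongr
    exact norm_toeplitz_le_tsum hsum N
  have det_lower := pow_le_norm_det_one_sub_I_smul_sub_smul_one E norm_toeplitz hsmall.le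
  rw [Fintype.card_fin] at det_lower
  set s := ε * ∑' n : ℤ, ‖φh n‖
  have one_sub_pos : 0 < 1 - s := sub_pos.2 hsmall
  have bound_pos : 0 < (√(1 + E ^ 2) * (1 - s)) ^ N := by positivity
  simp only [BN_eq_sinAddCosMul]
  rw [intervalIntegral.integral_const_mul, one_div (N : ℝ), lt_inv_mul_iff₀ (by positivity)]
  calc N * ((1 / 2) * log (1 + E ^ 2) - log 2 + log (1 - s))
      = log ((√(1 + E ^ 2) * (1 - s)) ^ N / 2 ^ N) := by
        rw [← div_pow, log_pow, log_div (by positivity) two_ne_zero,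
          log_mul (by positivity) one_sub_pos.ne', log_sqrt (by positivity)]
        ring
    _ ≤ _ := log_le_log (by positivity) (div_le_div_of_nonneg_right det_lower (by positivity))
    _ < _ := by
      simpa using log_norm_det_lt_integral_log_norm_det_sinAddCosMul (fun i : Fin N => i * ω)
        (norm_pos_iff.1 (bound_pos.trans_le det_lower)) (by positivity)
end

section
/- Let ρ > 0, 0 < c₀ ≤ ρ, 0 < ε < 1, C₁ ≥ 1 and C̄ > 0. Let φ̂ : ℤ → ℂ satisfy |φ̂(n)| < e^{−ρ|n|} and φ̂(−n) = conj(φ̂(n)) for all n, let x₀, ω ∈ ℝ with x₀ + nω − 1/2 ∉ ℤ for all n ∈ ℤ, let E ∈ ℝ, and let ξ : ℤ → ℂ satisfy ξ_0 = 1, |ξ_n| ≤ C̄·(1+|n|) for all n, and the eigenvalue equation tan(π(x₀+nω))·ξ_n + ε·∑_{k∈ℤ} φ̂(n−k)·ξ_k = E·ξ_n for all n ∈ ℤ. Let N be sufficiently large (depending on ρ, c₀, C₁, C̄), let j₀ ∈ ℤ with N/2 ≤ j₀ ≤ N^{C₁}, and assume |ξ_n| ≤ e^{−c₀·N/3} for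 all n with j₀ < |n| ≤ j₀ + N/2. Then the Hermitian matrix H_{[−j₀,j₀]}(x₀) has an eigenvalue E' with |E − E'| < e^{−c₀·N/5}. -/
/-- The long-range Maryland operator restricted to a finite set `Λ ⊂ ℤ`:
`H_Λ(x)(n,n') = tan(π(x+nω))·δ_{nn'} + ε·φ̂(n-n')`. -/
noncomputable def Hmat (x ω ε : ℝ) (φh : ℤ → ℂ) (Λ : Finset ℤ) : Matrix Λ Λ ℂ :=
  fun n n' => (if (n : ℤ) = (n' : ℤ) then (Real.tan (Real.pi * (x + (n : ℤ) * ω)) : ℂ) else 0)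
    + (ε : ℂ) * φh ((n : ℤ) - (n' : ℤ))

/-!
Truncate the generalized eigenfunction `ξ` to the box `[-j₀, j₀]`. By the eigenvalue equation, the
residual `(H_Λ - E) ξ` at a site `n` of the box is minus the sum of `H(n, k) ξ_k` over `k` outside
the box. Sites `k` in the annulus contribute little because `ξ` is small there, and the remaining
ones because they are at distance at least `N / 2` from `n`, where the exponential decay of the
kernel beats the linear growth of `ξ`. The residual is thus at most a power of `N` times
`e^{-c₀ N / 3}`, while the truncation has norm at least `|ξ_0| = 1`, and the distance from `E` to
the spectrum of a Hermitian matrix is at most the ratio of these norms.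
-/

open Matrix Module Filter

section NearbyEigenvalue

variable {𝕜 : Type*} [RCLike 𝕜]

theorem exists_hasEigenvalue_abs_sub_mul_norm_le {V : Type*} [NormedAddCommGroup V]
    [InnerProductSpace 𝕜 V] [FiniteDimensional 𝕜 V] {T : V →ₗ[𝕜] V} (hT : T.IsSymmetric)
    (E : ℝ) {v : V} (hv : v ≠ 0) :
    ∃ μ : ℝ, End.HasEigenvalue T (μ : 𝕜) ∧ |E - μ| * ‖v‖ ≤ ‖T v - (E : 𝕜) • v‖ := by
  have : Nontrivial V := ⟨v, 0, hv⟩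
  have : NeZero (finrank 𝕜 V) := ⟨finrank_pos.ne'⟩
  set b := hT.eigenvectorBasis rfl
  set eig := hT.eigenvalues rfl
  obtain ⟨i₀, hmin⟩ := Finite.exists_min fun i => |E - eig i|
  refine ⟨eig i₀, hT.hasEigenvalue_eigenvalues rfl i₀, ?_⟩
  have repr_residual (i) : b.repr (T v - (E : 𝕜) • v) i = ((eig i - E : ℝ) : 𝕜) * b.repr v i := by
    rw [map_sub, map_smul, PiLp.sub_apply, PiLp.smul_apply, smul_eq_mul,
      hT.eigenvectorBasis_apply_self_apply rfl, RCLike.ofReal_sub, sub_mul]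
  have sq_le : (|E - eig i₀| * ‖v‖) ^ 2 ≤ ‖T v - (E : 𝕜) • v‖ ^ 2 := by
    rw [mul_pow, ← b.repr.norm_map v, ← b.repr.norm_map (T v - _), EuclideanSpace.norm_sq_eq,
      EuclideanSpace.norm_sq_eq, Finset.mul_sum]
    refine Finset.sum_le_sum fun i _ => ?_
    rw [repr_residual, norm_mul, mul_pow, RCLike.norm_ofReal, abs_sub_comm (eig i)]
    gcongr ?_ ^ 2 * _
    exact hmin i
  exact (sq_le_sq₀ (by positivity) (by positivity)).1 sq_le

variable {ι : Type*} [Fintype ι]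

theorem norm_toLp_two_le_sum_norm (r : ι → 𝕜) : ‖WithLp.toLp 2 r‖ ≤ ∑ i, ‖r i‖ := by
  rw [EuclideanSpace.norm_eq, Real.sqrt_le_left (by positivity)]
  exact Finset.sum_sq_le_sq_sum_of_nonneg fun i _ => norm_nonneg (r i)

variable [DecidableEq ι]

theorem det_sub_smul_one_eq_zero_of_hasEigenvalue_toEuclideanLin {A : Matrix ι ι 𝕜} {μ : 𝕜}
    (hμ : End.HasEigenvalue A.toEuclideanLin μ) : (A - μ • 1).det = 0 := by
  obtain ⟨u, hu⟩ := hμ.exists_hasEigenvector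
  refine exists_mulVec_eq_zero_iff.1 ⟨u.ofLp, by simpa using hu.2, ?_⟩
  have eigen_eq : A *ᵥ u.ofLp = μ • u.ofLp := congr_arg WithLp.ofLp hu.apply_eq_smul
  rw [sub_mulVec, smul_mulVec, one_mulVec, eigen_eq, sub_self]

theorem exists_det_sub_smul_one_eq_zero_abs_sub_le_sum_norm {A : Matrix ι ι 𝕜}
    (hA : A.IsHermitian) (E : ℝ) {v : ι → 𝕜} {i₀ : ι} (hv : v i₀ = 1) :
    ∃ E' : ℝ, (A - (E' : 𝕜) • 1).det = 0 ∧ |E - E'| ≤ ∑ i, ‖(A *ᵥ v - (E : 𝕜) • v) i‖ := by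
  have one_le_norm : 1 ≤ ‖WithLp.toLp 2 v‖ := by
    simpa [hv] using PiLp.norm_apply_le (WithLp.toLp 2 v) i₀
  obtain ⟨E', hE', hle⟩ := exists_hasEigenvalue_abs_sub_mul_norm_le
    (isSymmetric_toEuclideanLin_iff.2 hA) E (norm_pos_iff.1 (one_pos.trans_le one_le_norm))
  refine ⟨E', det_sub_smul_one_eq_zero_of_hasEigenvalue_toEuclideanLin hE', ?_⟩
  calc |E - E'| ≤ |E - E'| * ‖WithLp.toLp 2 v‖ :=
        le_mul_of_one_le_right (abs_nonneg _) one_le_norm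
    _ ≤ ‖WithLp.toLp 2 (A *ᵥ v - (E : 𝕜) • v)‖ := hle
    _ ≤ ∑ i, ‖(A *ᵥ v - (E : 𝕜) • v) i‖ := norm_toLp_two_le_sum_norm _

end NearbyEigenvalue

section Weight

/-- The weight `(1 + |m|) e^{-a|m|}` on `ℤ`, which dominates the product of an exponentially
decaying kernel with a linearly growing sequence. -/
noncomputable def linearExpWeight (a : ℝ) (m : ℤ) : ℝ :=
  (1 + |(m : ℝ)|) * Real.exp (-a * |(m : ℝ)|)

theorem linearExpWeight_nonneg (a : ℝ) (m : ℤ) : 0 ≤ linearExpWeight a m := by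
  unfold linearExpWeight; positivity

theorem summable_linearExpWeight {a : ℝ} (ha : 0 < a) : Summable (linearExpWeight a) := by
  have summable_nat : Summable fun n : ℕ => (1 + (n : ℝ)) * Real.exp (-a * n) :=
    ((Real.summable_pow_mul_exp_neg_nat_mul 0 ha).add
      (Real.summable_pow_mul_exp_neg_nat_mul 1 ha)).congr fun n => by ring
  apply Summable.of_nat_of_neg <;> simpa [linearExpWeight] using summable_nat

theorem hasSum_linearExpWeight_sub {a : ℝ} (ha : 0 < a) (n : ℤ) :
    HasSum (fun k => linearExpWeight a (n - k)) (∑' m, linearExpWeight a m) :=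
  (Equiv.subLeft n).hasSum_iff.2 (summable_linearExpWeight ha).hasSum

theorem exp_neg_mul_abs_le_linearExpWeight {a ρ : ℝ} (haρ : a ≤ ρ) (m : ℤ) :
    Real.exp (-ρ * |(m : ℝ)|) ≤ linearExpWeight a m := by
  calc Real.exp (-ρ * |(m : ℝ)|) ≤ Real.exp (-a * |(m : ℝ)|) := by gcongr
    _ ≤ linearExpWeight a m :=
        le_mul_of_one_le_left (Real.exp_pos _).le (le_add_of_nonneg_right (abs_nonneg _))

theorem linearExpWeight_le_exp_mul {a ρ L : ℝ} (haρ : a ≤ ρ) {m : ℤ} (hm : L ≤ |(m : ℝ)|) :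
    linearExpWeight ρ m ≤ Real.exp (-(ρ - a) * L) * linearExpWeight a m := by
  have exp_le : Real.exp (-ρ * |(m : ℝ)|) ≤
      Real.exp (-(ρ - a) * L) * Real.exp (-a * |(m : ℝ)|) := by
    rw [← Real.exp_add, Real.exp_le_exp]
    nlinarith
  calc linearExpWeight ρ m
      ≤ (1 + |(m : ℝ)|) * (Real.exp (-(ρ - a) * L) * Real.exp (-a * |(m : ℝ)|)) := by
        unfold linearExpWeight; gcongr
    _ = Real.exp (-(ρ - a) * L) * linearExpWeight a m := by unfold linearExpWeight; ring

theorem one_add_abs_le_mul_one_add_abs_sub (x y : ℝ) :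
    1 + |y| ≤ (1 + |x|) * (1 + |x - y|) := by
  have triangle : |y| ≤ |x| + |x - y| := by simpa using abs_sub x (x - y)
  nlinarith [abs_nonneg x, abs_nonneg (x - y)]

variable {R : Type*} [SeminormedRing R] {ρ C : ℝ} {n k : ℤ} {c z : R}

theorem norm_mul_le_linearExpWeight (hc : ‖c‖ ≤ Real.exp (-ρ * |((n - k : ℤ) : ℝ)|))
    (hz : ‖z‖ ≤ C * (1 + |(k : ℝ)|)) :
    ‖c * z‖ ≤ C * (1 + |(n : ℝ)|) * linearExpWeight ρ (n - k) := by
  have hC : 0 ≤ C := nonneg_of_mul_nonneg_left ((norm_nonneg z).trans hz) (by positivity)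
  have growth : 1 + |(k : ℝ)| ≤ (1 + |(n : ℝ)|) * (1 + |((n - k : ℤ) : ℝ)|) := by
    simpa using one_add_abs_le_mul_one_add_abs_sub (n : ℝ) k
  calc ‖c * z‖ ≤ ‖c‖ * ‖z‖ := norm_mul_le c z
    _ ≤ Real.exp (-ρ * |((n - k : ℤ) : ℝ)|) *
          (C * ((1 + |(n : ℝ)|) * (1 + |((n - k : ℤ) : ℝ)|))) := by
        gcongr
        exact hz.trans (by gcongr)
    _ = C * (1 + |(n : ℝ)|) * linearExpWeight ρ (n - k) := by unfold linearExpWeight; ring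

/- A term outside the box is small for one of two reasons: either `k` lies in the annulus, where
`z` is small, or `k` is at distance at least `L` from `n`, where part of the decay of `c` is
traded for smallness. -/
theorem norm_mul_le_mul_linearExpWeight_of_annulus {a j L η : ℝ}
    (hc : ‖c‖ ≤ Real.exp (-ρ * |((n - k : ℤ) : ℝ)|)) (hC : 1 ≤ C)
    (hz : ‖z‖ ≤ C * (1 + |(k : ℝ)|)) (haρ : a ≤ ρ) (hn : |(n : ℝ)| ≤ j)
    (hη : Real.exp (-(ρ - a) * L) ≤ η) (hsmall : |(k : ℝ)| ≤ j + L → ‖z‖ ≤ η) :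
    ‖c * z‖ ≤ η * (C * (1 + j)) * linearExpWeight a (n - k) := by
  have hη₀ : 0 ≤ η := (Real.exp_pos _).le.trans hη
  have hj : 0 ≤ j := (abs_nonneg _).trans hn
  have hw := linearExpWeight_nonneg a (n - k)
  rcases le_or_gt |(k : ℝ)| (j + L) with near | far
  · have one_le : 1 ≤ C * (1 + j) := one_le_mul_of_one_le_of_one_le hC (by linarith)
    calc ‖c * z‖ ≤ ‖c‖ * ‖z‖ := norm_mul_le c z
      _ ≤ linearExpWeight a (n - k) * η := by
          gcongr
          exacts [hc.trans (exp_neg_mul_abs_le_linearExpWeight haρ _), hsmall near]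
      _ = η * 1 * linearExpWeight a (n - k) := by ring
      _ ≤ η * (C * (1 + j)) * linearExpWeight a (n - k) := by gcongr
  · have dist_ge : L ≤ |((n - k : ℤ) : ℝ)| := by
      push_cast
      linarith [abs_sub_abs_le_abs_sub (k : ℝ) n, abs_sub_comm (k : ℝ) n]
    calc ‖c * z‖ ≤ C * (1 + |(n : ℝ)|) * linearExpWeight ρ (n - k) :=
          norm_mul_le_linearExpWeight hc hz
      _ ≤ C * (1 + j) * (η * linearExpWeight a (n - k)) := by
          have far_le : linearExpWeight ρ (n - k) ≤ η * linearExpWeight a (n - k) :=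
            (linearExpWeight_le_exp_mul haρ dist_ge).trans (by gcongr)
          gcongr
          exact linearExpWeight_nonneg ρ (n - k)
      _ = η * (C * (1 + j)) * linearExpWeight a (n - k) := by ring

end Weight

section Truncation

variable {𝕜 : Type*} [RCLike 𝕜]

/-- The restriction `H_Λ` of an infinite matrix `H` to a finite set of indices `Λ`. -/
def finiteVolumeRestriction {ι R : Type*} (A : Matrix ι ι R) (Λ : Finset ι) : Matrix Λ Λ R :=
  A.submatrix Subtype.val Subtype.val

theorem isHermitian_finiteVolumeRestriction {ι R : Type*} [Star R] {A : Matrix ι ι R}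
    (hA : A.IsHermitian) (Λ : Finset ι) : (finiteVolumeRestriction A Λ).IsHermitian :=
  hA.submatrix _

theorem finiteVolumeRestriction_mulVec_sub_smul_apply {ι : Type*} {A : Matrix ι ι 𝕜} {ξ : ι → 𝕜}
    {E : 𝕜} {Λ : Finset ι} (n : Λ) (heig : HasSum (fun k => A n k * ξ k) (E * ξ n)) :
    (finiteVolumeRestriction A Λ *ᵥ (fun k : Λ => ξ k) - E • fun k : Λ => ξ k) n =
      -∑' k : {k // k ∉ Λ}, A n k * ξ k := by
  have split := heig.summable.sum_add_tsum_subtype_compl Λ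
  rw [heig.tsum_eq, ← Finset.sum_coe_sort] at split
  simp only [Pi.sub_apply, Pi.smul_apply, smul_eq_mul, mulVec, dotProduct,
    finiteVolumeRestriction, submatrix_apply, ← split]
  ring

theorem mem_Icc_neg_iff_abs_cast_le {j k : ℤ} : k ∈ Finset.Icc (-j) j ↔ |(k : ℝ)| ≤ j := by
  rw [Finset.mem_Icc, ← abs_le]
  norm_cast

theorem card_Icc_neg {j : ℤ} (hj : 0 ≤ j) : ((Finset.Icc (-j) j).card : ℝ) = 2 * j + 1 := by
  have : ((Finset.Icc (-j) j).card : ℤ) = 2 * j + 1 := by rw [Int.card_Icc]; omega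
  exact_mod_cast this

variable {A : Matrix ℤ ℤ 𝕜} {ξ : ℤ → 𝕜} {a ρ C L η : ℝ} {j : ℤ}

theorem norm_tsum_compl_Icc_le (ha : 0 < a) (haρ : a ≤ ρ)
    (hdecay : ∀ n k, n ≠ k → ‖A n k‖ ≤ Real.exp (-ρ * |((n - k : ℤ) : ℝ)|)) (hC : 1 ≤ C)
    (hgrowth : ∀ k : ℤ, ‖ξ k‖ ≤ C * (1 + |(k : ℝ)|)) (hη : Real.exp (-(ρ - a) * L) ≤ η)
    (hsmall : ∀ k : ℤ, (j : ℝ) < |(k : ℝ)| → |(k : ℝ)| ≤ j + L → ‖ξ k‖ ≤ η)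
    {n : ℤ} (hn : n ∈ Finset.Icc (-j) j) :
    ‖∑' k : {k // k ∉ Finset.Icc (-j) j}, A n k * ξ k‖ ≤
      η * (C * (1 + j)) * ∑' m, linearExpWeight a m := by
  have hnj : |(n : ℝ)| ≤ j := mem_Icc_neg_iff_abs_cast_le.1 hn
  have hη₀ : 0 ≤ η := (Real.exp_pos _).le.trans hη
  have hj : (0 : ℝ) ≤ j := (abs_nonneg _).trans hnj
  have hsum := hasSum_linearExpWeight_sub ha n
  have term_le (k : {k // k ∉ Finset.Icc (-j) j}) :
      ‖A n k * ξ k‖ ≤ η * (C * (1 + j)) * linearExpWeight a (n - k) := by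
    have hkj : (j : ℝ) < |((k : ℤ) : ℝ)| := not_le.1 (mem_Icc_neg_iff_abs_cast_le.not.1 k.2)
    exact norm_mul_le_mul_linearExpWeight_of_annulus
      (hdecay n k (ne_of_mem_of_not_mem hn k.2)) hC (hgrowth k) haρ hnj hη (hsmall k hkj)
  calc ‖∑' k : {k // k ∉ Finset.Icc (-j) j}, A n k * ξ k‖
      ≤ η * (C * (1 + j)) * ∑' k : {k // k ∉ Finset.Icc (-j) j}, linearExpWeight a (n - k) :=
        tsum_of_norm_bounded ((hsum.summable.subtype _).hasSum.mul_left _) term_le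
    _ ≤ η * (C * (1 + j)) * ∑' k, linearExpWeight a (n - k) := by
        gcongr
        exact hsum.summable.tsum_subtype_le _ _ fun k => linearExpWeight_nonneg a (n - k)
    _ = η * (C * (1 + j)) * ∑' m, linearExpWeight a m := by rw [hsum.tsum_eq]

theorem exists_det_finiteVolumeRestriction_Icc_eq_zero_abs_sub_le (ha : 0 < a) (haρ : a ≤ ρ)
    (hA : A.IsHermitian)
    (hdecay : ∀ n k, n ≠ k → ‖A n k‖ ≤ Real.exp (-ρ * |((n - k : ℤ) : ℝ)|))
    {E : ℝ} (hξ₀ : ξ 0 = 1) (hgrowth : ∀ k : ℤ, ‖ξ k‖ ≤ C * (1 + |(k : ℝ)|))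
    (heig : ∀ n, HasSum (fun k => A n k * ξ k) ((E : 𝕜) * ξ n)) (hj : 0 ≤ j)
    (hη : Real.exp (-(ρ - a) * L) ≤ η)
    (hsmall : ∀ k : ℤ, (j : ℝ) < |(k : ℝ)| → |(k : ℝ)| ≤ j + L → ‖ξ k‖ ≤ η) :
    ∃ E' : ℝ, (finiteVolumeRestriction A (Finset.Icc (-j) j) - (E' : 𝕜) • 1).det = 0 ∧
      |E - E'| ≤ (2 * j + 1) * (η * (C * (1 + j)) * ∑' m, linearExpWeight a m) := by
  have hC : 1 ≤ C := by simpa [hξ₀] using hgrowth 0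
  have h₀ : (0 : ℤ) ∈ Finset.Icc (-j) j := by simpa using hj
  obtain ⟨E', hdet, hle⟩ := exists_det_sub_smul_one_eq_zero_abs_sub_le_sum_norm
    (isHermitian_finiteVolumeRestriction hA (Finset.Icc (-j) j)) E
    (v := fun k => ξ k) (i₀ := ⟨0, h₀⟩) hξ₀
  refine ⟨E', hdet, hle.trans ?_⟩
  rw [← card_Icc_neg hj, ← Fintype.card_coe, ← nsmul_eq_mul]
  refine Finset.sum_le_card_nsmul _ _ _ fun n _ => ?_
  rw [finiteVolumeRestriction_mulVec_sub_smul_apply n (heig n), norm_neg]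
  exact norm_tsum_compl_Icc_le ha haρ hdecay hC hgrowth hη hsmall n.2

end Truncation

theorem eventually_mul_rpow_mul_exp_neg_lt {b c : ℝ} (hcb : c < b) (K s : ℝ) :
    ∀ᶠ x : ℝ in atTop, K * x ^ s * Real.exp (-b * x) < Real.exp (-c * x) := by
  have tendsto_zero :=
    (tendsto_rpow_mul_exp_neg_mul_atTop_nhds_zero s (b - c) (sub_pos.2 hcb)).const_mul K
  rw [mul_zero] at tendsto_zero
  filter_upwards [tendsto_zero.eventually_lt_const one_pos] with x hx
  calc K * x ^ s * Real.exp (-b * x)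
      = K * (x ^ s * Real.exp (-(b - c) * x)) * Real.exp (-c * x) := by
        rw [show -b * x = -(b - c) * x + -c * x by ring, Real.exp_add]; ring
    _ < Real.exp (-c * x) := mul_lt_of_lt_one_left (Real.exp_pos _) hx

theorem energy_close_to_finite_volume_spectrum_general {𝕜 : Type*} [RCLike 𝕜]
    {ρ c₀ : ℝ} (hc₀ : 0 < c₀) (hc₀ρ : c₀ ≤ ρ) (C₁ C : ℝ) :
    ∃ N₀ : ℕ, ∀ N : ℕ, N₀ ≤ N →
      ∀ A : Matrix ℤ ℤ 𝕜, A.IsHermitian →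
        (∀ n k, n ≠ k → ‖A n k‖ ≤ Real.exp (-ρ * |((n - k : ℤ) : ℝ)|)) →
      ∀ E : ℝ, ∀ ξ : ℤ → 𝕜, ξ 0 = 1 →
        (∀ n : ℤ, ‖ξ n‖ ≤ C * (1 + |(n : ℝ)|)) →
        (∀ n, HasSum (fun k => A n k * ξ k) ((E : 𝕜) * ξ n)) →
      ∀ j₀ : ℤ, (N : ℝ) / 2 ≤ j₀ → (j₀ : ℝ) ≤ (N : ℝ) ^ C₁ →
        (∀ n : ℤ, (j₀ : ℝ) < |(n : ℝ)| → |(n : ℝ)| ≤ j₀ + (N : ℝ) / 2 →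
          ‖ξ n‖ ≤ Real.exp (-c₀ * N / 3)) →
        ∃ E' : ℝ,
          (finiteVolumeRestriction A (Finset.Icc (-j₀) j₀) - (E' : 𝕜) • 1).det = 0 ∧
          |E - E'| < Real.exp (-c₀ * N / 5) := by
  have hρ : 0 < ρ := hc₀.trans_le hc₀ρ
  set S : ℝ := ∑' m, linearExpWeight (ρ / 3) m
  have hS : 0 ≤ S := tsum_nonneg (linearExpWeight_nonneg _)
  obtain ⟨N₀, hN₀⟩ := eventually_atTop.1 <| (eventually_ge_atTop 1).and <|
    tendsto_natCast_atTop_atTop.eventually <|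
      eventually_mul_rpow_mul_exp_neg_lt (by linarith : c₀ / 5 < c₀ / 3) (12 * C * S) (C₁ * 2)
  refine ⟨N₀, fun N hN A hA hdecay E ξ hξ₀ hgrowth heig j₀ hj hjN hsmall => ?_⟩
  obtain ⟨hN1, hlarge⟩ := hN₀ N hN
  have hN1' : (1 : ℝ) ≤ N := by exact_mod_cast hN1
  have hC : 1 ≤ C := by simpa [hξ₀] using hgrowth 0
  have hj₀ : 0 ≤ j₀ := by exact_mod_cast (by linarith : (0 : ℝ) ≤ j₀)
  have far_small : Real.exp (-(ρ - ρ / 3) * (N / 2)) ≤ Real.exp (-c₀ * N / 3) :=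
    Real.exp_le_exp.2 (by nlinarith)
  obtain ⟨E', hdet, hle⟩ := exists_det_finiteVolumeRestriction_Icc_eq_zero_abs_sub_le
    (div_pos hρ three_pos) (by linarith) hA hdecay hξ₀ hgrowth heig hj₀ far_small hsmall
  refine ⟨E', hdet, hle.trans_lt ?_⟩
  have poly_le : (2 * (j₀ : ℝ) + 1) * (1 + j₀) ≤ 12 * (N : ℝ) ^ (C₁ * 2) := by
    rw [Real.rpow_mul (by positivity), Real.rpow_two]
    calc (2 * (j₀ : ℝ) + 1) * (1 + j₀) ≤ 4 * (N : ℝ) ^ C₁ * (3 * (N : ℝ) ^ C₁) := by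
          gcongr <;> linarith
      _ = 12 * ((N : ℝ) ^ C₁) ^ 2 := by ring
  calc (2 * (j₀ : ℝ) + 1) * (Real.exp (-c₀ * N / 3) * (C * (1 + j₀)) * S)
      = (2 * (j₀ : ℝ) + 1) * (1 + j₀) * (C * S * Real.exp (-c₀ * N / 3)) := by ring
    _ ≤ 12 * (N : ℝ) ^ (C₁ * 2) * (C * S * Real.exp (-c₀ * N / 3)) := by gcongr
    _ = 12 * C * S * (N : ℝ) ^ (C₁ * 2) * Real.exp (-(c₀ / 3) * N) := by ring_nf
    _ < Real.exp (-(c₀ / 5) * N) := hlarge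
    _ = Real.exp (-c₀ * N / 5) := by ring_nf

section Maryland

/-- The long-range Maryland operator on all of `ℤ`, as an infinite matrix whose restriction to a
finite set `Λ` is `Hmat`. -/
noncomputable def marylandMatrix (x ω ε : ℝ) (φh : ℤ → ℂ) : Matrix ℤ ℤ ℂ :=
  diagonal (fun n : ℤ => (Real.tan (Real.pi * (x + n * ω)) : ℂ)) +
    of fun n k : ℤ => (ε : ℂ) * φh (n - k)

variable {ρ C ε : ℝ} {φh ξ : ℤ → ℂ}

theorem finiteVolumeRestriction_marylandMatrix (x ω ε : ℝ) (φh : ℤ → ℂ) (Λ : Finset ℤ) :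
    finiteVolumeRestriction (marylandMatrix x ω ε φh) Λ = Hmat x ω ε φh Λ :=
  rfl

theorem isHermitian_marylandMatrix (x ω ε : ℝ)
    (hsymm : ∀ n, φh (-n) = starRingEnd ℂ (φh n)) : (marylandMatrix x ω ε φh).IsHermitian := by
  refine (isHermitian_diagonal_of_self_adjoint _ ?_).add (IsHermitian.ext fun n k => ?_)
  · exact funext fun n => Complex.conj_ofReal _
  · simp only [of_apply, ← neg_sub n k, hsymm]
    simp

theorem norm_marylandMatrix_le (x ω : ℝ) (hε : |ε| ≤ 1)
    (hφ : ∀ n : ℤ, ‖φh n‖ ≤ Real.exp (-ρ * |(n : ℝ)|)) {n k : ℤ} (hnk : n ≠ k) :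
    ‖marylandMatrix x ω ε φh n k‖ ≤ Real.exp (-ρ * |((n - k : ℤ) : ℝ)|) := by
  calc ‖marylandMatrix x ω ε φh n k‖ = |ε| * ‖φh (n - k)‖ := by simp [marylandMatrix, hnk]
    _ ≤ ‖φh (n - k)‖ := mul_le_of_le_one_left (norm_nonneg _) hε
    _ ≤ Real.exp (-ρ * |((n - k : ℤ) : ℝ)|) := hφ (n - k)

theorem hasSum_marylandMatrix_mul {x ω : ℝ} (hρ : 0 < ρ)
    (hφ : ∀ n : ℤ, ‖φh n‖ ≤ Real.exp (-ρ * |(n : ℝ)|))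
    (hgrowth : ∀ k : ℤ, ‖ξ k‖ ≤ C * (1 + |(k : ℝ)|)) (n : ℤ) :
    HasSum (fun k => marylandMatrix x ω ε φh n k * ξ k)
      ((Real.tan (Real.pi * (x + n * ω)) : ℂ) * ξ n + ε * ∑' k, φh (n - k) * ξ k) := by
  have hsummable : Summable fun k => φh (n - k) * ξ k :=
    .of_norm_bounded ((hasSum_linearExpWeight_sub hρ n).summable.mul_left _) fun k =>
      norm_mul_le_linearExpWeight (hφ (n - k)) (hgrowth k)
  have row (k : ℤ) : marylandMatrix x ω ε φh n k * ξ k =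
      (if k = n then (Real.tan (Real.pi * (x + n * ω)) : ℂ) * ξ n else 0) +
        ε * (φh (n - k) * ξ k) := by
    obtain rfl | hkn := eq_or_ne k n
    · simp [marylandMatrix, add_mul, mul_assoc]
    · simp [marylandMatrix, hkn, hkn.symm, mul_assoc]
  simp only [row]
  exact (hasSum_ite_eq n _).add (hsummable.hasSum.mul_left (ε : ℂ))

end Maryland

/-- If a normalized polynomially bounded generalized eigenfunction is already small
on the annulus `j₀ < |n| ≤ j₀ + N/2`, then the energy `E` is exponentially close to
an eigenvalue of the (Hermitian) restriction `H_{[-j₀,j₀]}(x₀)`. -/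
theorem energy_close_to_finite_volume_spectrum
    (ρ c₀ ε C₁ Cbar : ℝ) (hρ : 0 < ρ) (hc₀ : 0 < c₀) (hc₀ρ : c₀ ≤ ρ)
    (hε : 0 < ε) (hε1 : ε < 1) (hC₁ : 1 ≤ C₁) (hCbar : 0 < Cbar) :
    ∃ N₀ : ℕ, ∀ N : ℕ, N₀ ≤ N →
      ∀ φh : ℤ → ℂ,
        (∀ n : ℤ, ‖φh n‖ < Real.exp (-ρ * |(n : ℝ)|)) →
        (∀ n : ℤ, φh (-n) = starRingEnd ℂ (φh n)) →
      ∀ x₀ ω : ℝ, (∀ n m : ℤ, x₀ + n * ω - 1/2 ≠ (m : ℝ)) →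
      ∀ E : ℝ, ∀ ξ : ℤ → ℂ, ξ 0 = 1 →
        (∀ n : ℤ, ‖ξ n‖ ≤ Cbar * (1 + |(n : ℝ)|)) →
        (∀ n : ℤ, (Real.tan (Real.pi * (x₀ + n * ω)) : ℂ) * ξ n
            + (ε : ℂ) * ∑' k : ℤ, φh (n - k) * ξ k = (E : ℂ) * ξ n) →
      ∀ j₀ : ℤ, (N : ℝ) / 2 ≤ (j₀ : ℝ) → (j₀ : ℝ) ≤ (N : ℝ) ^ C₁ →
        (∀ n : ℤ, (j₀ : ℝ) < (|n| : ℝ) → (|n| : ℝ) ≤ (j₀ : ℝ) + (N : ℝ) / 2 →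
          ‖ξ n‖ ≤ Real.exp (-c₀ * N / 3)) →
        ∃ E' : ℝ,
          (Hmat x₀ ω ε φh (Finset.Icc (-j₀) j₀) - (E' : ℂ) • 1).det = 0 ∧
          |E - E'| < Real.exp (-c₀ * N / 5) := by
  obtain ⟨N₀, hN₀⟩ :=
    energy_close_to_finite_volume_spectrum_general (𝕜 := ℂ) hc₀ hc₀ρ C₁ Cbar
  refine ⟨N₀, fun N hN φh hφ hsymm x₀ ω _ E ξ hξ₀ hgrowth heig => ?_⟩
  have hφ_le (n : ℤ) : ‖φh n‖ ≤ Real.exp (-ρ * |(n : ℝ)|) := (hφ n).le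
  have hε_abs : |ε| ≤ 1 := (abs_of_pos hε).trans_le hε1.le
  simp only [← finiteVolumeRestriction_marylandMatrix]
  exact hN₀ N hN _ (isHermitian_marylandMatrix x₀ ω ε hsymm)
    (fun _ _ => norm_marylandMatrix_le x₀ ω hε_abs hφ_le) E ξ hξ₀ hgrowth
    fun n => heig n ▸ hasSum_marylandMatrix_mul hρ hφ_le hgrowth n
end
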